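/- arXiv:1309.1582 — 2 statements merged into one kernel-verified Lean document; each statement's English description precedes it below -/
import Mathlib

section
/- (Brezis–Merle interior estimate, Theorem A.) Let Ω ⊂ ℝ² be an open set, 0 < a ≤ b < +∞, m ∈ ℝ, and K ⊂ Ω a compact set. Then there exists a constant c = c(a, b, m, K, Ω) such that for every function V : Ω → ℝ with a ≤ V(x) ≤ b for all x ∈ Ω, and every C² function u on Ω satisfying −Δu = V e^u in Ω and inf_Ω u ≥ m, one has sup_K u ≤ c. -/
open MeasureTheory Filter Metric

abbrev E2 := EuclideanSpace ℝ (Fin 2)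

noncomputable def pd (j : Fin 2) (u : E2 → ℝ) (x : E2) : ℝ :=
  fderiv ℝ u x (EuclideanSpace.single j 1)

noncomputable def lapl (u : E2 → ℝ) (x : E2) : ℝ :=
  pd 0 (pd 0 u) x + pd 1 (pd 1 u) x

/-!
Averaging `u` over circles of radius `r` around a point `x` gives a radial mean `M` and a flux
`f = -r M'` satisfying `f' ≥ a r e ^ M`. Choose `x` to maximise `(R - |y - z|) ^ 2 e ^ u y` on a
disc around the given point `z`; then `-Δu` is at most a multiple of `e ^ u x` up to the length
scale `l = e ^ (-u x / 2)`, so `M` has not dropped much at radius `l` and the flux exceeds the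
critical value `2` at some radius comparable to `l`. Beyond that radius `M + 2 log r` decreases,
and since `M ≥ m` at a fixed macroscopic radius it is bounded below before that; hence
`f' ≥ κ / r`, and the flux at macroscopic scale is at least `κ log (1 / l)` up to a constant. On
the other hand `M r ≥ m + f r` well inside the disc, so `f' ≥ k e ^ f`, and a solution of this
inequality that exists on an interval of given length is bounded at its left end. Therefore `l` is
bounded below.
-/

section

open Set Real Laplacian Topology

theorem le_of_hasDerivAt_nonneg {φ φ' : ℝ → ℝ} {p q : ℝ} (hpq : p ≤ q)
    (hφ : ContinuousOn φ (Icc p q)) (hφ' : ∀ x ∈ Ioo p q, HasDerivAt φ (φ' x) x)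
    (hnonneg : ∀ x ∈ Ioo p q, 0 ≤ φ' x) : φ p ≤ φ q := by
  rw [← interior_Icc] at hφ' hnonneg
  exact monotoneOn_of_hasDerivWithinAt_nonneg (convex_Icc p q) hφ
    (fun x hx => (hφ' x hx).hasDerivWithinAt) hnonneg (left_mem_Icc.2 hpq) (right_mem_Icc.2 hpq) hpq

theorem mul_log_div_le_sub_of_le_mul_deriv {φ φ' : ℝ → ℝ} {p q k : ℝ} (hp : 0 < p) (hpq : p ≤ q)
    (hφ : ∀ x ∈ Icc p q, HasDerivAt φ (φ' x) x) (hk : ∀ x ∈ Ioo p q, k ≤ x * φ' x) :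
    k * log (q / p) ≤ φ q - φ p := by
  have hderiv : ∀ x ∈ Icc p q, HasDerivAt (fun x => φ x - k * log x) (φ' x - k * x⁻¹) x :=
    fun x hx => (hφ x hx).sub ((hasDerivAt_log (hp.trans_le hx.1).ne').const_mul k)
  have hle : φ p - k * log p ≤ φ q - k * log q :=
    le_of_hasDerivAt_nonneg hpq (fun x hx => (hderiv x hx).continuousAt.continuousWithinAt)
      (fun x hx => hderiv x (Ioo_subset_Icc_self hx)) fun x hx => by
        rw [sub_nonneg, ← div_eq_mul_inv, div_le_iff₀' (hp.trans hx.1)]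
        exact hk x hx
  rw [log_div (hp.trans_le hpq).ne' hp.ne']
  linarith

theorem sub_le_mul_sq_div_two_of_deriv_le_mul {φ φ' : ℝ → ℝ} {q k : ℝ} (hq : 0 ≤ q)
    (hφ : ContinuousOn φ (Icc 0 q)) (hφ' : ∀ x ∈ Ioo 0 q, HasDerivAt φ (φ' x) x)
    (hk : ∀ x ∈ Ioo 0 q, φ' x ≤ k * x) : φ q - φ 0 ≤ k * q ^ 2 / 2 := by
  have hle : k / 2 * 0 ^ 2 - φ 0 ≤ k / 2 * q ^ 2 - φ q :=
    le_of_hasDerivAt_nonneg (φ := fun x => k / 2 * x ^ 2 - φ x) hq (by fun_prop)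
      (fun x hx => (((hasDerivAt_pow 2 x).const_mul (k / 2)).sub (hφ' x hx)).congr_deriv
        (show _ = k * x - φ' x by push_cast; ring)) fun x hx => sub_nonneg.2 (hk x hx)
  linarith

theorem mul_sub_le_exp_neg_of_mul_exp_le_deriv {φ φ' : ℝ → ℝ} {p q k : ℝ} (hpq : p ≤ q)
    (hφ : ∀ x ∈ Icc p q, HasDerivAt φ (φ' x) x) (hk : ∀ x ∈ Ioo p q, k * exp (φ x) ≤ φ' x) :
    k * (q - p) ≤ exp (-φ p) := by
  have hderiv : ∀ x ∈ Icc p q,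
      HasDerivAt (fun x => -exp (-φ x) - k * x) (exp (-φ x) * φ' x - k) x := fun x hx =>
    ((hφ x hx).fun_neg.exp.fun_neg.fun_sub ((hasDerivAt_id' x).const_mul k)).congr_deriv (by ring)
  have hle : -exp (-φ p) - k * p ≤ -exp (-φ q) - k * q :=
    le_of_hasDerivAt_nonneg hpq (fun x hx => (hderiv x hx).continuousAt.continuousWithinAt)
      (fun x hx => hderiv x (Ioo_subset_Icc_self hx)) fun x hx => by
        rw [sub_nonneg, exp_neg, inv_mul_eq_div, le_div_iff₀ (exp_pos _)]
        exact hk x hx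
  linarith [exp_pos (-φ q)]

theorem sq_mul_exp_sub_two_mul_log {r : ℝ} (hr : 0 < r) (k : ℝ) :
    r ^ 2 * exp (k - 2 * log r) = exp k := by
  have hlog : 2 * log r = log (r ^ 2) := by simp
  rw [hlog, exp_sub, exp_log (by positivity), mul_div_cancel₀ _ (by positivity)]

theorem exp_neg_half_sq_mul_exp (x : ℝ) : exp (-x / 2) ^ 2 * exp x = 1 := by
  rw [← exp_nat_mul, ← exp_add, exp_eq_one_iff]
  push_cast
  ring

/-- The radial shadow of a solution of `-Δu ≥ a e ^ u` on a disc of radius `ρ`: `M r` stands for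
the mean of `u` over the circle of radius `r`, `g r` for the mean of `-Δu` over it, and
`f r = -r * M' r` for the outward flux of `-∇u` through it, divided by `2 * π`. -/
structure IsRadialSupersolution (a ρ : ℝ) (M f g : ℝ → ℝ) : Prop where
  continuousOn_mean : ContinuousOn M (Ico 0 ρ)
  continuousOn_flux : ContinuousOn f (Ico 0 ρ)
  flux_zero : f 0 = 0
  hasDerivAt_mean : ∀ r ∈ Ioo 0 ρ, HasDerivAt M (-f r / r) r
  hasDerivAt_flux : ∀ r ∈ Ioo 0 ρ, HasDerivAt f (r * g r) r
  mul_exp_mean_le : ∀ r ∈ Ioo 0 ρ, a * exp (M r) ≤ g r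

namespace IsRadialSupersolution

variable {a ρ : ℝ} {M f g : ℝ → ℝ}

theorem monotoneOn_flux (h : IsRadialSupersolution a ρ M f g) (ha : 0 ≤ a) :
    MonotoneOn f (Ico 0 ρ) := by
  refine monotoneOn_of_hasDerivWithinAt_nonneg (f' := fun r => r * g r) (convex_Ico 0 ρ)
    h.continuousOn_flux (fun r hr => ?_) fun r hr => ?_ <;> rw [interior_Ico] at hr
  · exact (h.hasDerivAt_flux r hr).hasDerivWithinAt
  · exact mul_nonneg hr.1.le ((mul_nonneg ha (exp_pos _).le).trans (h.mul_exp_mean_le r hr))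

theorem flux_nonneg (h : IsRadialSupersolution a ρ M f g) (ha : 0 ≤ a) {r : ℝ}
    (hr : r ∈ Ico 0 ρ) : 0 ≤ f r :=
  h.flux_zero ▸ h.monotoneOn_flux ha ⟨le_rfl, hr.1.trans_lt hr.2⟩ hr hr.1

theorem neg_mul_log_le_mean_sub (h : IsRadialSupersolution a ρ M f g) {p q k : ℝ} (hp : 0 < p)
    (hpq : p ≤ q) (hq : q < ρ) (hk : ∀ r ∈ Ioo p q, f r ≤ k) :
    -k * log (q / p) ≤ M q - M p :=
  mul_log_div_le_sub_of_le_mul_deriv hp hpq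
    (fun r hr => h.hasDerivAt_mean r ⟨hp.trans_le hr.1, hr.2.trans_lt hq⟩) fun r hr => by
      rw [mul_div_cancel₀ _ (hp.trans hr.1).ne']
      exact neg_le_neg (hk r hr)

theorem mean_add_flux_mul_log_le (h : IsRadialSupersolution a ρ M f g) (ha : 0 ≤ a) {r R : ℝ}
    (hr : 0 < r) (hrR : r ≤ R) (hR : R < ρ) : M R + f r * log (R / r) ≤ M r := by
  have hle : f r * log (R / r) ≤ -M R - -M r :=
    mul_log_div_le_sub_of_le_mul_deriv (φ := fun s => -M s) hr hrR
      (fun s hs => (h.hasDerivAt_mean s ⟨hr.trans_le hs.1, hs.2.trans_lt hR⟩).neg) fun s hs => by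
        rw [neg_div, neg_neg, mul_div_cancel₀ _ (hr.trans hs.1).ne']
        exact h.monotoneOn_flux ha ⟨hr.le, hrR.trans_lt hR⟩
          ⟨(hr.trans hs.1).le, hs.2.trans hR⟩ hs.1.le
  linarith

theorem mul_log_div_le_flux_sub (h : IsRadialSupersolution a ρ M f g) (ha : 0 ≤ a) {p q k : ℝ}
    (hp : 0 < p) (hpq : p ≤ q) (hq : q < ρ) (hk : ∀ r ∈ Ioo p q, k - 2 * log r ≤ M r) :
    a * exp k * log (q / p) ≤ f q - f p := by
  refine mul_log_div_le_sub_of_le_mul_deriv hp hpq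
    (fun r hr => h.hasDerivAt_flux r ⟨hp.trans_le hr.1, hr.2.trans_lt hq⟩) fun r hr => ?_
  have hr0 : 0 < r := hp.trans hr.1
  calc a * exp k = r ^ 2 * (a * exp (k - 2 * log r)) := by
        rw [← sq_mul_exp_sub_two_mul_log hr0 k]; ring
    _ ≤ r ^ 2 * (a * exp (M r)) := by gcongr; exact hk r hr
    _ ≤ r ^ 2 * g r := by gcongr; exact h.mul_exp_mean_le r ⟨hr0, hr.2.trans hq⟩
    _ = r * (r * g r) := by ring

theorem mean_zero_sub_le_mean (h : IsRadialSupersolution a ρ M f g) {q k : ℝ} (hq : 0 ≤ q)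
    (hqρ : q < ρ) (hk : ∀ r ∈ Ioo 0 q, g r ≤ k) : M 0 - k * q ^ 2 / 4 ≤ M q := by
  have hflux : ∀ r ∈ Ioo 0 q, f r ≤ k * r ^ 2 / 2 := fun r hr => by
    have hle := sub_le_mul_sq_div_two_of_deriv_le_mul (k := k) hr.1.le
      (h.continuousOn_flux.mono fun s hs => ⟨hs.1, hs.2.trans_lt (hr.2.trans hqρ)⟩)
      (fun s hs => h.hasDerivAt_flux s ⟨hs.1, hs.2.trans (hr.2.trans hqρ)⟩) fun s hs => by
        rw [mul_comm k]
        exact mul_le_mul_of_nonneg_left (hk s ⟨hs.1, hs.2.trans hr.2⟩) hs.1.le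
    rwa [h.flux_zero, sub_zero] at hle
  have hle : -M q - -M 0 ≤ k / 2 * q ^ 2 / 2 :=
    sub_le_mul_sq_div_two_of_deriv_le_mul (φ := fun r => -M r) hq
      (h.continuousOn_mean.mono fun r hr => ⟨hr.1, hr.2.trans_lt hqρ⟩).neg
      (fun r hr => (h.hasDerivAt_mean r ⟨hr.1, hr.2.trans hqρ⟩).neg) fun r hr => by
        rw [neg_div, neg_neg, div_le_iff₀ hr.1]
        linarith [hflux r hr]
  linarith

-- `2` is the critical flux: while the flux stays below it, `M r ≥ -2 log r - β`, so that `r * g r`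
-- dominates a multiple of `1 / r` and the flux grows at least logarithmically.
theorem two_le_flux (h : IsRadialSupersolution a ρ M f g) (ha : 0 < a) {l β : ℝ} (hl : 0 < l)
    (hβ : -β - 2 * log l ≤ M l) (hρ : exp (2 * exp β / a) * l < ρ) :
    2 ≤ f (exp (2 * exp β / a) * l) := by
  set A := exp (2 * exp β / a) with hA
  have hlA : l ≤ A * l := le_mul_of_one_le_left hl.le (one_le_exp (by positivity))
  by_contra! hlt
  have hmean : ∀ r ∈ Ioo l (A * l), -β - 2 * log r ≤ M r := fun r hr => by
    have hle := h.neg_mul_log_le_mean_sub hl hr.1.le (hr.2.trans hρ) fun s hs =>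
      (h.monotoneOn_flux ha.le ⟨(hl.trans hs.1).le, (hs.2.trans hr.2).trans hρ⟩
        ⟨hl.le.trans hlA, hρ⟩ (hs.2.trans hr.2).le).trans hlt.le
    rw [log_div (hl.trans hr.1).ne' hl.ne'] at hle
    linarith
  have hgrow := h.mul_log_div_le_flux_sub ha.le hl hlA hρ hmean
  have htwo : a * exp (-β) * log (A * l / l) = 2 := by
    rw [mul_div_cancel_right₀ _ hl.ne', hA, log_exp, exp_neg]
    field_simp
  linarith [h.flux_nonneg ha.le ⟨hl.le, hlA.trans_lt hρ⟩]

theorem mul_exp_mean_le_exp_neg_flux (h : IsRadialSupersolution a ρ M f g) (ha : 0 ≤ a) {p : ℝ}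
    (hp : 0 < p) (hρ : 2 * exp 1 * p < ρ) :
    a * p ^ 2 * exp (M (2 * exp 1 * p)) ≤ exp (-f p) := by
  set R := 2 * exp 1 * p
  have hpR : 2 * p ≤ R := by nlinarith [add_one_le_exp 1]
  have hgrow : ∀ r ∈ Ioo p (2 * p), p * (a * exp (M R)) * exp (f r) ≤ r * g r := fun r hr => by
    have hr0 : 0 < r := hp.trans hr.1
    have hrR : r ≤ R := hr.2.le.trans hpR
    have hlog : 1 ≤ log (R / r) := by
      rw [le_log_iff_exp_le (by positivity), le_div_iff₀ hr0]
      nlinarith [exp_pos 1, hr.2]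
    have hmean : M R + f r ≤ M r := by
      nlinarith [h.mean_add_flux_mul_log_le ha hr0 hrR hρ,
        h.flux_nonneg ha ⟨hr0.le, hrR.trans_lt hρ⟩]
    calc p * (a * exp (M R)) * exp (f r) = p * (a * exp (M R + f r)) := by rw [exp_add]; ring
      _ ≤ r * (a * exp (M r)) := by gcongr; exact hr.1.le
      _ ≤ r * g r := by gcongr; exact h.mul_exp_mean_le r ⟨hr0, hrR.trans_lt hρ⟩
  have hle := mul_sub_le_exp_neg_of_mul_exp_le_deriv (by linarith)
    (fun r hr => h.hasDerivAt_flux r ⟨hp.trans_le hr.1, (hr.2.trans hpR).trans_lt hρ⟩) hgrow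
  calc a * p ^ 2 * exp (M R) = p * (a * exp (M R)) * (2 * p - p) := by ring
    _ ≤ exp (-f p) := hle

theorem mul_log_div_le_neg_log (h : IsRadialSupersolution a ρ M f g) (ha : 0 < a) {m p s : ℝ}
    (hs : 0 < s) (hsp : s ≤ p) (hρ : 2 * exp 1 * p < ρ) (hm : m ≤ M (2 * exp 1 * p))
    (hflux : 2 ≤ f s) :
    a * p ^ 2 * exp m * log (p / s) ≤ -log (a * p ^ 2 * exp m) := by
  set R := 2 * exp 1 * p
  have hp : 0 < p := hs.trans_le hsp
  have hpR : p ≤ R := by nlinarith [add_one_le_exp 1]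
  have hmean : ∀ r ∈ Ioo s p, m + 2 * log p - 2 * log r ≤ M r := fun r hr => by
    have hr0 : 0 < r := hs.trans hr.1
    have hfr : 2 ≤ f r := hflux.trans <| h.monotoneOn_flux ha.le
      ⟨hs.le, (hsp.trans hpR).trans_lt hρ⟩ ⟨hr0.le, (hr.2.le.trans hpR).trans_lt hρ⟩ hr.1.le
    have hlog : 0 ≤ log (p / r) := log_nonneg ((one_le_div hr0).2 hr.2.le)
    have hlogR : log (p / r) ≤ log (R / r) := by gcongr
    have hle := h.mean_add_flux_mul_log_le ha.le hr0 (hr.2.le.trans hpR) hρ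
    rw [log_div hp.ne' hr0.ne'] at hlog hlogR
    nlinarith
  have hκ : a * exp (m + 2 * log p) = a * p ^ 2 * exp m := by
    rw [exp_add, two_mul, exp_add, exp_log hp]
    ring
  have hgrow := h.mul_log_div_le_flux_sub ha.le hs hsp (hpR.trans_lt hρ) hmean
  have hκf : log (a * p ^ 2 * exp m) ≤ -f p := by
    rw [log_le_iff_le_exp (by positivity)]
    refine le_trans ?_ (h.mul_exp_mean_le_exp_neg_flux ha.le hp hρ)
    gcongr
  rw [hκ] at hgrow
  linarith

end IsRadialSupersolution

theorem exists_mean_zero_le {a ρ : ℝ} (m B : ℝ) (ha : 0 < a) (hρ : 0 < ρ) :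
    ∃ C, ∀ M f g : ℝ → ℝ, IsRadialSupersolution a ρ M f g → (∀ r ∈ Ioo 0 ρ, m ≤ M r) →
      (∀ r ∈ Ioo 0 ρ, r < exp (-M 0 / 2) → g r ≤ B * exp (M 0)) → M 0 ≤ C := by
  set A := exp (2 * exp (B / 4) / a)
  set p := ρ / 6 with hp
  set κ := a * p ^ 2 * exp m
  refine ⟨2 * (max 0 (-log κ / κ) + log (A / p)), fun M f g h hm hB => ?_⟩
  set l := exp (-M 0 / 2)
  have hp0 : 0 < p := by positivity
  have hpρ : 2 * exp 1 * p < ρ := by nlinarith [exp_one_lt_three]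
  have hlog : log l = -M 0 / 2 := log_exp _
  have hX : log (p / (A * l)) = M 0 / 2 - log (A / p) := by
    rw [log_div hp0.ne' (by positivity), log_mul (by positivity) (by positivity),
      log_div (by positivity) hp0.ne', hlog]
    ring
  suffices log (p / (A * l)) ≤ max 0 (-log κ / κ) by linarith
  rcases le_total p (A * l) with hle | hle
  · exact (log_nonpos (by positivity) ((div_le_one (by positivity)).2 hle)).trans (le_max_left _ _)
  have hAlρ : A * l < ρ := by linarith
  have hlρ : l < ρ :=
    (le_mul_of_one_le_left (by positivity) (one_le_exp (by positivity))).trans_lt hAlρ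
  have hMl : -(B / 4) - 2 * log l ≤ M l := by
    have hle := h.mean_zero_sub_le_mean (by positivity) hlρ fun r hr =>
      hB r ⟨hr.1, hr.2.trans hlρ⟩ hr.2
    rw [mul_assoc, mul_comm (exp _), exp_neg_half_sq_mul_exp] at hle
    linarith
  have hκX := h.mul_log_div_le_neg_log ha (by positivity) hle hpρ (hm _ ⟨by positivity, hpρ⟩)
    (h.two_le_flux ha (exp_pos _) hMl hAlρ)
  exact le_max_of_le_right ((le_div_iff₀' (by positivity)).2 hκX)

section CircleAverage

theorem convexOn_map_circleAverage_le {φ : ℝ → ℝ} (hφ : ConvexOn ℝ univ φ) (hφc : Continuous φ)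
    {v : ℂ → ℝ} {c : ℂ} {r : ℝ} (hv : CircleIntegrable v c r) (hφv : CircleIntegrable (φ ∘ v) c r) :
    φ (circleAverage v c r) ≤ circleAverage (φ ∘ v) c r := by
  simp only [circleAverage_eq_intervalAverage]
  exact hφ.map_set_average_le hφc.continuousOn isClosed_univ (by simp)
    (by simp [ENNReal.mul_eq_top]) (by simp) (intervalIntegrable_iff.1 hv)
    (intervalIntegrable_iff.1 hφv)

variable {F : Type*} [NormedAddCommGroup F] [NormedSpace ℝ F] {f : ℂ → F} {c : ℂ} {r ρ : ℝ}

theorem hasDerivAt_intervalIntegral_of_continuousOn_deriv {G G' : ℝ → ℝ → F} {s : Set ℝ}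
    {a b x₀ : ℝ} (hs : s ∈ 𝓝 x₀) (hG : ∀ x ∈ s, ContinuousOn (G x) (uIcc a b))
    (hG' : ContinuousOn (fun p : ℝ × ℝ => G' p.1 p.2) (s ×ˢ uIcc a b))
    (hderiv : ∀ x ∈ s, ∀ t ∈ uIcc a b, HasDerivAt (fun x => G x t) (G' x t) x) :
    HasDerivAt (fun x => ∫ t in a..b, G x t) (∫ t in a..b, G' x₀ t) x₀ := by
  obtain ⟨ε, hε, hsub⟩ := Metric.nhds_basis_closedBall.mem_iff.1 hs
  obtain ⟨B, hB⟩ := ((isCompact_closedBall x₀ ε).prod isCompact_uIcc).exists_bound_of_continuousOn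
    (hG'.mono (prod_mono_left hsub))
  have hG'x₀ : ContinuousOn (G' x₀) (uIcc a b) :=
    hG'.comp (f := fun t => (x₀, t)) (by fun_prop) fun t ht => ⟨mem_of_mem_nhds hs, ht⟩
  refine (intervalIntegral.hasDerivAt_integral_of_dominated_loc_of_deriv_le
    (closedBall_mem_nhds x₀ hε) (eventually_of_mem hs fun x hx => ?_)
    (hG x₀ (mem_of_mem_nhds hs)).intervalIntegrable ?_ (ae_of_all _ fun t ht x hx => ?_)
    (bound := fun _ => B) intervalIntegrable_const (ae_of_all _ fun t ht x hx => ?_)).2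
  · exact ((hG x hx).mono uIoc_subset_uIcc).aestronglyMeasurable measurableSet_uIoc
  · exact (hG'x₀.mono uIoc_subset_uIcc).aestronglyMeasurable measurableSet_uIoc
  · exact hB (x, t) ⟨hx, uIoc_subset_uIcc ht⟩
  · exact hderiv x (hsub hx) t (uIoc_subset_uIcc ht)

theorem circleMap_mem_ball (hr : |r| < ρ) (θ : ℝ) : circleMap c r θ ∈ ball c ρ :=
  sphere_subset_ball hr (circleMap_mem_sphere' c r θ)

theorem continuousOn_comp_circleMap {X : Type*} [TopologicalSpace X] {f : ℂ → X}
    (hf : ContinuousOn f (ball c ρ)) :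
    ContinuousOn (fun p : ℝ × ℝ => f (circleMap c p.1 p.2)) (ball 0 ρ ×ˢ univ) :=
  hf.comp (by fun_prop) fun p hp => circleMap_mem_ball (by simpa using hp.1) p.2

theorem continuous_comp_circleMap {X : Type*} [TopologicalSpace X] {f : ℂ → X}
    (hf : ContinuousOn f (ball c ρ)) (hr : |r| < ρ) :
    Continuous fun θ => f (circleMap c r θ) :=
  hf.comp_continuous (continuous_circleMap c r) (circleMap_mem_ball hr)

theorem hasDerivAt_circleMap_radius (c : ℂ) (r θ : ℝ) :
    HasDerivAt (fun r => circleMap c r θ) (circleMap 0 1 θ) r := by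
  simpa [circleMap] using
    ((hasDerivAt_id r).ofReal_comp.mul_const (Complex.exp (θ * Complex.I))).const_add c

theorem hasDerivAt_circleAverage (hf : ContDiffOn ℝ 1 f (ball c ρ)) (hr : |r| < ρ) :
    HasDerivAt (circleAverage f c)
      ((2 * π)⁻¹ • ∫ θ in 0..2 * π, fderiv ℝ f (circleMap c r θ) (circleMap 0 1 θ)) r := by
  have hDf : ContinuousOn (fderiv ℝ f) (ball c ρ) :=
    hf.continuousOn_fderiv_of_isOpen isOpen_ball le_rfl
  refine (hasDerivAt_intervalIntegral_of_continuousOn_deriv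
    (G' := fun r θ => fderiv ℝ f (circleMap c r θ) (circleMap 0 1 θ))
    (isOpen_ball.mem_nhds (x := r) (s := ball 0 ρ) (by simpa using hr)) (fun s hs => ?_) ?_
    fun s hs θ _ => ?_).const_smul _
  · exact (continuous_comp_circleMap hf.continuousOn (by simpa using hs)).continuousOn
  · exact ((continuousOn_comp_circleMap hDf).clm_apply (by fun_prop)).mono
      (prod_mono_right (subset_univ _))
  · have hs' := circleMap_mem_ball (c := c) (by simpa using hs) θ
    exact ((hf.differentiableOn one_ne_zero).differentiableAt
      (isOpen_ball.mem_nhds hs')).hasFDerivAt.comp_hasDerivAt s (hasDerivAt_circleMap_radius c s θ)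

theorem hasDerivAt_deriv_circleAverage (hf : ContDiffOn ℝ 2 f (ball c ρ)) (hr : |r| < ρ) :
    HasDerivAt (deriv (circleAverage f c))
      ((2 * π)⁻¹ • ∫ θ in 0..2 * π,
        fderiv ℝ (fderiv ℝ f) (circleMap c r θ) (circleMap 0 1 θ) (circleMap 0 1 θ)) r := by
  have hDf : ContDiffOn ℝ 1 (fderiv ℝ f) (ball c ρ) := hf.fderiv_of_isOpen isOpen_ball le_rfl
  have hD2f : ContinuousOn (fderiv ℝ (fderiv ℝ f)) (ball c ρ) :=
    hDf.continuousOn_fderiv_of_isOpen isOpen_ball le_rfl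
  have hnhds : ball 0 ρ ∈ 𝓝 r := isOpen_ball.mem_nhds (by simpa using hr)
  have hderiv : deriv (circleAverage f c) =ᶠ[𝓝 r] fun s =>
      (2 * π)⁻¹ • ∫ θ in 0..2 * π, fderiv ℝ f (circleMap c s θ) (circleMap 0 1 θ) := by
    filter_upwards [hnhds] with s hs
    exact (hasDerivAt_circleAverage (hf.of_le one_le_two) (by simpa using hs)).deriv
  refine HasDerivAt.congr_of_eventuallyEq ?_ hderiv
  refine (hasDerivAt_intervalIntegral_of_continuousOn_deriv
    (G' := fun r θ => fderiv ℝ (fderiv ℝ f) (circleMap c r θ) (circleMap 0 1 θ) (circleMap 0 1 θ))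
    hnhds (fun s hs => ?_) ?_ fun s hs θ _ => ?_).const_smul _
  · exact ((continuous_comp_circleMap hDf.continuousOn (by simpa using hs)).clm_apply
      (continuous_circleMap 0 1)).continuousOn
  · exact (((continuousOn_comp_circleMap hD2f).clm_apply (by fun_prop)).clm_apply
      (by fun_prop)).mono (prod_mono_right (subset_univ _))
  · have hs' := circleMap_mem_ball (c := c) (by simpa using hs) θ
    have hD := ((hDf.differentiableOn one_ne_zero).differentiableAt
      (isOpen_ball.mem_nhds hs')).hasFDerivAt.comp_hasDerivAt s (hasDerivAt_circleMap_radius c s θ)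
    simpa using hD.clm_apply (hasDerivAt_const s (circleMap 0 1 θ))

theorem laplacian_eq_fderiv_fderiv_rotation (f : ℂ → F) (z : ℂ) (θ : ℝ) :
    Δ f z = fderiv ℝ (fderiv ℝ f) z (circleMap 0 1 θ) (circleMap 0 1 θ) +
      fderiv ℝ (fderiv ℝ f) z (circleMap 0 1 θ * Complex.I) (circleMap 0 1 θ * Complex.I) := by
  simp [InnerProductSpace.laplacian_eq_iteratedFDeriv_orthonormalBasis f
    (Complex.orthonormalBasisOneI.map (rotation (Circle.exp θ))), iteratedFDeriv_two_apply,
    circleMap_zero]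

theorem continuousOn_laplacian_of_contDiffOn {f : ℂ → F} {s : Set ℂ} (hs : IsOpen s)
    (hf : ContDiffOn ℝ 2 f s) : ContinuousOn (Δ f) s := by
  have hD2f : ContinuousOn (fderiv ℝ (fderiv ℝ f)) s :=
    (hf.fderiv_of_isOpen hs le_rfl).continuousOn_fderiv_of_isOpen hs le_rfl
  rw [InnerProductSpace.laplacian_eq_iteratedFDeriv_complexPlane]
  simp only [iteratedFDeriv_two_apply]
  fun_prop

variable [CompleteSpace F]

-- Integrates the `θ`-derivative of the angular component of the gradient.
theorem integral_fderiv_circleMap_eq_smul (hf : ContDiffOn ℝ 2 f (ball c ρ)) (hr : |r| < ρ) :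
    ∫ θ in 0..2 * π, fderiv ℝ f (circleMap c r θ) (circleMap 0 1 θ) =
      r • ∫ θ in 0..2 * π, fderiv ℝ (fderiv ℝ f) (circleMap c r θ)
        (circleMap 0 1 θ * Complex.I) (circleMap 0 1 θ * Complex.I) := by
  have hDf : ContDiffOn ℝ 1 (fderiv ℝ f) (ball c ρ) := hf.fderiv_of_isOpen isOpen_ball le_rfl
  have hD2f : ContinuousOn (fderiv ℝ (fderiv ℝ f)) (ball c ρ) :=
    hDf.continuousOn_fderiv_of_isOpen isOpen_ball le_rfl
  have hcont₁ := continuous_comp_circleMap hDf.continuousOn hr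
  have hcont₂ := continuous_comp_circleMap hD2f hr
  have hderiv : ∀ θ, HasDerivAt
      (fun θ => fderiv ℝ f (circleMap c r θ) (circleMap 0 1 θ * Complex.I))
      (r • fderiv ℝ (fderiv ℝ f) (circleMap c r θ)
          (circleMap 0 1 θ * Complex.I) (circleMap 0 1 θ * Complex.I) -
        fderiv ℝ f (circleMap c r θ) (circleMap 0 1 θ)) θ := fun θ => by
    have hD := ((hDf.differentiableOn one_ne_zero).differentiableAt
      (isOpen_ball.mem_nhds (circleMap_mem_ball hr θ))).hasFDerivAt.comp_hasDerivAt θ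
        (hasDerivAt_circleMap c r θ)
    have hr_smul : circleMap 0 r θ * Complex.I = r • (circleMap 0 1 θ * Complex.I) := by
      simp [circleMap_zero, mul_assoc]
    refine (hD.clm_apply ((hasDerivAt_circleMap 0 1 θ).mul_const Complex.I)).congr_deriv ?_
    rw [hr_smul, mul_assoc _ Complex.I, Complex.I_mul_I, mul_neg_one, map_neg, map_smul,
      smul_apply, sub_eq_add_neg]
    rfl
  have hperiodic : ∫ θ in 0..2 * π, (r • fderiv ℝ (fderiv ℝ f) (circleMap c r θ)
          (circleMap 0 1 θ * Complex.I) (circleMap 0 1 θ * Complex.I) -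
        fderiv ℝ f (circleMap c r θ) (circleMap 0 1 θ)) = 0 := by
    rw [intervalIntegral.integral_eq_sub_of_hasDerivAt (fun θ _ => hderiv θ)
      (Continuous.intervalIntegrable (by fun_prop) _ _)]
    simp [circleMap]
  rw [intervalIntegral.integral_sub (Continuous.intervalIntegrable (by fun_prop) _ _)
    (Continuous.intervalIntegrable (by fun_prop) _ _), intervalIntegral.integral_smul,
    sub_eq_zero] at hperiodic
  exact hperiodic.symm

theorem hasDerivAt_smul_deriv_circleAverage (hf : ContDiffOn ℝ 2 f (ball c ρ)) (hr : |r| < ρ) :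
    HasDerivAt (fun r => r • deriv (circleAverage f c) r) (r • circleAverage (Δ f) c r) r := by
  have hDf : ContDiffOn ℝ 1 (fderiv ℝ f) (ball c ρ) := hf.fderiv_of_isOpen isOpen_ball le_rfl
  have hcont := continuous_comp_circleMap
    (hDf.continuousOn_fderiv_of_isOpen isOpen_ball le_rfl) hr
  refine ((hasDerivAt_id r).smul (hasDerivAt_deriv_circleAverage hf hr)).congr_deriv ?_
  rw [(hasDerivAt_circleAverage (hf.of_le one_le_two) hr).deriv,
    integral_fderiv_circleMap_eq_smul hf hr, circleAverage]
  have hΔ : ∀ θ, Δ f (circleMap c r θ) =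
      fderiv ℝ (fderiv ℝ f) (circleMap c r θ) (circleMap 0 1 θ) (circleMap 0 1 θ) +
        fderiv ℝ (fderiv ℝ f) (circleMap c r θ) (circleMap 0 1 θ * Complex.I)
          (circleMap 0 1 θ * Complex.I) := fun θ => laplacian_eq_fderiv_fderiv_rotation f _ θ
  simp only [hΔ, id_eq, one_smul]
  rw [intervalIntegral.integral_add (Continuous.intervalIntegrable (by fun_prop) _ _)
    (Continuous.intervalIntegrable (by fun_prop) _ _), smul_add, smul_add, smul_comm _ r]

theorem isRadialSupersolution_circleAverage {v : ℂ → ℝ} {a ρ : ℝ} {c : ℂ} (ha : 0 ≤ a)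
    (hv : ContDiffOn ℝ 2 v (ball c ρ)) (hΔ : ∀ z ∈ ball c ρ, a * exp (v z) ≤ -Δ v z) :
    IsRadialSupersolution a ρ (circleAverage v c) (fun r => -(r * deriv (circleAverage v c) r))
      (circleAverage (-Δ v) c) := by
  have hlt : ∀ {r}, r ∈ Ico 0 ρ → |r| < ρ := fun hr => (abs_of_nonneg hr.1).trans_lt hr.2
  have hneg : ∀ r, circleAverage (-Δ v) c r = -circleAverage (Δ v) c r := fun r => by
    simpa using circleAverage_smul (a := (-1 : ℝ)) (f := Δ v) (c := c) (R := r)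
  have hflux : ∀ r ∈ Ico 0 ρ, HasDerivAt (fun r => -(r * deriv (circleAverage v c) r))
      (r * circleAverage (-Δ v) c r) r := fun r hr => by
    rw [hneg, mul_neg]
    exact (hasDerivAt_smul_deriv_circleAverage hv (hlt hr)).neg
  refine ⟨fun r hr => ?_, fun r hr => (hflux r hr).continuousAt.continuousWithinAt, by simp,
    fun r hr => ?_, fun r hr => hflux r (Ioo_subset_Ico_self hr), fun r hr => ?_⟩
  · exact (hasDerivAt_circleAverage (hv.of_le one_le_two) (hlt hr)).continuousAt.continuousWithinAt
  · rw [neg_neg, mul_div_cancel_left₀ _ hr.1.ne']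
    exact (hasDerivAt_circleAverage (hv.of_le one_le_two)
      (hlt (Ioo_subset_Ico_self hr))).differentiableAt.hasDerivAt
  · have hsub : sphere c |r| ⊆ ball c ρ := sphere_subset_ball (hlt (Ioo_subset_Ico_self hr))
    have hvc : ContinuousOn v (sphere c |r|) := hv.continuousOn.mono hsub
    have hΔc : ContinuousOn (Δ v) (sphere c |r|) :=
      (continuousOn_laplacian_of_contDiffOn isOpen_ball hv).mono hsub
    calc a * exp (circleAverage v c r) ≤ a * circleAverage (exp ∘ v) c r := by
          gcongr
          exact convexOn_map_circleAverage_le convexOn_exp continuous_exp hvc.circleIntegrable'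
            hvc.rexp.circleIntegrable'
      _ = circleAverage (a • (exp ∘ v)) c r := by rw [circleAverage_smul, smul_eq_mul]
      _ ≤ circleAverage (-Δ v) c r :=
          circleAverage_mono (hvc.rexp.const_smul a).circleIntegrable' hΔc.neg.circleIntegrable'
            fun z hz => hΔ z (hsub hz)

end CircleAverage

-- Maximise `(R - dist y z) ^ 2 * φ y`: halving the distance to the boundary loses a factor `4`.
theorem exists_le_four_mul_of_continuousOn_closedBall {X : Type*} [PseudoMetricSpace X]
    [ProperSpace X] {φ : X → ℝ} {z : X} {R : ℝ} (hR : 0 < R)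
    (hφ : ContinuousOn φ (closedBall z R)) (hz : 0 < φ z) :
    ∃ x d, 0 < d ∧ dist x z + d = R ∧ R ^ 2 * φ z ≤ d ^ 2 * φ x ∧
      ∀ y ∈ closedBall x (d / 2), φ y ≤ 4 * φ x := by
  obtain ⟨x, hx, hmax⟩ := (isCompact_closedBall z R).exists_isMaxOn
    (f := fun y => (R - dist y z) ^ 2 * φ y) ⟨z, mem_closedBall_self hR.le⟩ (by fun_prop)
  set d := R - dist x z with hd
  have hzx : R ^ 2 * φ z ≤ d ^ 2 * φ x := by simpa using hmax (mem_closedBall_self hR.le)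
  have hpos : 0 < d ^ 2 * φ x := (by positivity : 0 < R ^ 2 * φ z).trans_le hzx
  have hφx : 0 < φ x := pos_of_mul_pos_right hpos (sq_nonneg d)
  have hd0 : 0 < d := (sub_nonneg.2 hx).lt_of_ne (by rintro h; simp [hd, ← h] at hpos)
  refine ⟨x, d, hd0, add_sub_cancel _ _, hzx, fun y hy => ?_⟩
  have hdist : d / 2 ≤ R - dist y z := by linarith [dist_triangle y x z, mem_closedBall.1 hy]
  by_contra! hlt
  have hφy : 0 < φ y := (by positivity : 0 < 4 * φ x).trans hlt
  have hyx : (d / 2) ^ 2 * φ y ≤ d ^ 2 * φ x :=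
    calc (d / 2) ^ 2 * φ y ≤ (R - dist y z) ^ 2 * φ y := by gcongr
      _ ≤ d ^ 2 * φ x := hmax (mem_closedBall.2 (by linarith))
  nlinarith [sq_pos_of_pos hd0]

theorem exists_center_le_of_laplacian_le {a ρ : ℝ} (m B : ℝ) (ha : 0 < a) (hρ : 0 < ρ) :
    ∃ C, ∀ (v : ℂ → ℝ) (c : ℂ), ContDiffOn ℝ 2 v (ball c ρ) →
      (∀ y ∈ ball c ρ, a * exp (v y) ≤ -Δ v y) → (∀ y ∈ ball c ρ, m ≤ v y) →
      (∀ y ∈ ball c ρ, dist y c < exp (-v c / 2) → -Δ v y ≤ B * exp (v c)) → v c ≤ C := by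
  obtain ⟨C, hC⟩ := exists_mean_zero_le m B ha hρ
  refine ⟨C, fun v c hv hΔ hm hB => ?_⟩
  have hsub : ∀ {r}, r ∈ Ioo 0 ρ → sphere c |r| ⊆ ball c ρ := fun hr =>
    sphere_subset_ball ((abs_of_pos hr.1).trans_lt hr.2)
  have hC' := hC _ _ _ (isRadialSupersolution_circleAverage ha.le hv hΔ)
  simp only [circleAverage_zero] at hC'
  refine hC' (fun r hr => ?_) fun r hr hrc => ?_
  · rw [← circleAverage_const m c r]
    exact circleAverage_mono (circleIntegrable_const m c r)
      (hv.continuousOn.mono (hsub hr)).circleIntegrable' fun y hy => hm y (hsub hr hy)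
  · refine circleAverage_mono_on_of_le_circle
      ((continuousOn_laplacian_of_contDiffOn isOpen_ball hv).mono (hsub hr)).neg.circleIntegrable'
      fun y hy => hB y (hsub hr hy) ?_
    rwa [mem_sphere.1 hy, abs_of_pos hr.1]

theorem exists_forall_le_of_laplacian_bounds {a δ : ℝ} (b m : ℝ) (ha : 0 < a) (hδ : 0 < δ) :
    ∃ C, ∀ (v : ℂ → ℝ) (z : ℂ), ContDiffOn ℝ 2 v (ball z δ) →
      (∀ y ∈ ball z δ, a * exp (v y) ≤ -Δ v y ∧ -Δ v y ≤ b * exp (v y)) →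
      (∀ y ∈ ball z δ, m ≤ v y) → v z ≤ C := by
  set R := δ / 2 with hR
  have hR0 : 0 < R := half_pos hδ
  obtain ⟨C, hC⟩ := exists_center_le_of_laplacian_le m (b * 4) ha hR0
  refine ⟨max C (log (4 / R ^ 2)), fun v z hv hΔ hm => ?_⟩
  have hab := (hΔ z (mem_ball_self hδ)).1.trans (hΔ z (mem_ball_self hδ)).2
  have hb : 0 < b := ha.trans_le (le_of_mul_le_mul_right hab (exp_pos _))
  obtain ⟨x, d, hd, hdR, hzx, hx⟩ := exists_le_four_mul_of_continuousOn_closedBall hR0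
    (hv.continuousOn.mono (closedBall_subset_ball (half_lt_self hδ))).rexp (exp_pos (v z))
  have hsub : ball x R ⊆ ball z δ := ball_subset_ball' (by linarith)
  rcases le_total (exp (-v x / 2)) (d / 2) with hl | hl
  · have hxC : v x ≤ C := hC v x (hv.mono hsub) (fun y hy => (hΔ y (hsub hy)).1)
      (fun y hy => hm y (hsub hy)) fun y hy hyx => by
        refine (hΔ y (hsub hy)).2.trans ?_
        rw [mul_assoc]
        gcongr
        exact hx y (hyx.le.trans hl)
    have hdR' : d ≤ R := by linarith [dist_nonneg (x := x) (y := z)]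
    have hzx' : exp (v z) ≤ exp (v x) :=
      le_of_mul_le_mul_left (hzx.trans (by gcongr : d ^ 2 * exp (v x) ≤ R ^ 2 * exp (v x)))
        (by positivity)
    exact le_max_of_le_left ((exp_le_exp.1 hzx').trans hxC)
  · have hd4 : d ^ 2 * exp (v x) ≤ 4 :=
      calc d ^ 2 * exp (v x) = 4 * ((d / 2) ^ 2 * exp (v x)) := by ring
        _ ≤ 4 * (exp (-v x / 2) ^ 2 * exp (v x)) := by gcongr
        _ = 4 := by rw [exp_neg_half_sq_mul_exp, mul_one]
    refine le_max_of_le_right ?_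
    rw [le_log_iff_exp_le (by positivity), le_div_iff₀' (by positivity)]
    exact hzx.trans hd4

section Laplacian

variable {E F G : Type*} [NormedAddCommGroup E] [InnerProductSpace ℝ E] [FiniteDimensional ℝ E]
  [NormedAddCommGroup F] [InnerProductSpace ℝ F] [FiniteDimensional ℝ F]
  [NormedAddCommGroup G] [NormedSpace ℝ G]

theorem laplacian_comp_linearIsometryEquiv (f : F → G) (e : E ≃ₗᵢ[ℝ] F) :
    Δ (f ∘ e) = Δ f ∘ e := by
  ext x
  have hcomp := e.toContinuousLinearEquiv.iteratedFDerivWithin_comp_right f uniqueDiffOn_univ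
    (mem_univ (e x)) 2
  rw [preimage_univ, iteratedFDerivWithin_univ, iteratedFDerivWithin_univ,
    LinearIsometryEquiv.coe_toContinuousLinearEquiv] at hcomp
  let b := stdOrthonormalBasis ℝ E
  rw [Function.comp_apply, InnerProductSpace.laplacian_eq_iteratedFDeriv_orthonormalBasis _ b,
    InnerProductSpace.laplacian_eq_iteratedFDeriv_orthonormalBasis f (b.map e)]
  simp only [hcomp, ContinuousMultilinearMap.compContinuousLinearMap_apply]
  refine Finset.sum_congr rfl fun i _ => ?_
  congr 1
  ext j
  fin_cases j <;> simp

theorem lapl_eq_laplacian {u : E2 → ℝ} {x : E2} (hu : DifferentiableAt ℝ (fderiv ℝ u) x) :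
    lapl u x = Δ u x := by
  have hpd : ∀ j, pd j (pd j u) x =
      fderiv ℝ (fderiv ℝ u) x (EuclideanSpace.single j 1) (EuclideanSpace.single j 1) := fun j => by
    change fderiv ℝ (fun y => fderiv ℝ u y (EuclideanSpace.single j 1)) x _ = _
    rw [fderiv_clm_apply hu (differentiableAt_const _)]
    simp
  simp [lapl, hpd, InnerProductSpace.laplacian_eq_iteratedFDeriv_orthonormalBasis u
    (EuclideanSpace.basisFun (Fin 2) ℝ), iteratedFDeriv_two_apply]

end Laplacian

theorem exists_forall_le_of_lapl_bounds {a δ : ℝ} (b m : ℝ) (ha : 0 < a) (hδ : 0 < δ) :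
    ∃ C, ∀ (u : E2 → ℝ) (x : E2), ContDiffOn ℝ 2 u (ball x δ) →
      (∀ y ∈ ball x δ, a * exp (u y) ≤ -lapl u y ∧ -lapl u y ≤ b * exp (u y)) →
      (∀ y ∈ ball x δ, m ≤ u y) → u x ≤ C := by
  obtain ⟨C, hC⟩ := exists_forall_le_of_laplacian_bounds b m ha hδ
  refine ⟨C, fun u x hu hΔ hm => ?_⟩
  let e : ℂ ≃ₗᵢ[ℝ] E2 := Complex.orthonormalBasisOneI.repr
  have he : ∀ y ∈ ball (e.symm x) δ, e y ∈ ball x δ := fun y hy => by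
    rwa [mem_ball, ← e.symm.dist_map, e.symm_apply_apply]
  have hlapl : ∀ y ∈ ball (e.symm x) δ, Δ (u ∘ e) y = lapl u (e y) := fun y hy => by
    rw [laplacian_comp_linearIsometryEquiv, Function.comp_apply, lapl_eq_laplacian]
    exact ((hu.fderiv_of_isOpen isOpen_ball le_rfl).differentiableOn one_ne_zero).differentiableAt
      (isOpen_ball.mem_nhds (he y hy))
  have hle := hC (u ∘ e) (e.symm x) (hu.comp e.toContinuousLinearEquiv.contDiff.contDiffOn he)
    (fun y hy => by rw [hlapl y hy]; exact hΔ _ (he y hy)) fun y hy => hm _ (he y hy)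
  rwa [Function.comp_apply, e.apply_symm_apply] at hle

end

theorem stmt1_general (a b m δ : ℝ) (ha : 0 < a) (hδ : 0 < δ) :
    ∃ c : ℝ, ∀ (Ω K : Set E2), thickening δ K ⊆ Ω → ∀ V u : E2 → ℝ,
      (∀ x ∈ Ω, a ≤ V x ∧ V x ≤ b) →
      ContDiffOn ℝ 2 u Ω →
      (∀ x ∈ Ω, -(lapl u x) = V x * Real.exp (u x)) →
      (∀ x ∈ Ω, m ≤ u x) →
      ∀ x ∈ K, u x ≤ c := by
  obtain ⟨c, hc⟩ := exists_forall_le_of_lapl_bounds b m ha hδ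
  refine ⟨c, fun Ω K hsub V u hV hu hpde hm x hx => ?_⟩
  have hball : ball x δ ⊆ Ω := (ball_subset_thickening hx δ).trans hsub
  refine hc u x (hu.mono hball) (fun y hy => ?_) fun y hy => hm y (hball hy)
  rw [hpde y (hball hy)]
  exact (hV y (hball hy)).imp (fun h => by gcongr) fun h => by gcongr

theorem stmt1 (Ω : Set E2) (hΩ : IsOpen Ω) (a b m : ℝ) (ha : 0 < a) (hab : a ≤ b)
    (K : Set E2) (hK : IsCompact K) (hKΩ : K ⊆ Ω) :
    ∃ c : ℝ, ∀ V u : E2 → ℝ,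
      (∀ x ∈ Ω, a ≤ V x ∧ V x ≤ b) →
      ContDiffOn ℝ 2 u Ω →
      (∀ x ∈ Ω, -(lapl u x) = V x * Real.exp (u x)) →
      (∀ x ∈ Ω, m ≤ u x) →
      ∀ x ∈ K, u x ≤ c := by
  obtain ⟨δ, hδ, hsub⟩ := hK.exists_thickening_subset_open hΩ hKΩ
  exact (stmt1_general a b m δ ha hδ).imp fun c hc => hc Ω K hsub
end

section
/- (Consequence of Theorem A.) Let Ω ⊂ ℝ² be a bounded open set with smooth boundary, 0 < a ≤ b < +∞, and K ⊂ Ω a compact set. Then there exists a constant c = c(a, b, K, Ω) such that for every function V : Ω → ℝ with a ≤ V(x) ≤ b for all x ∈ Ω, and every C² function u on the closure of Ω satisfying −Δu = V e^u in Ω and u = 0 on ∂Ω, one has sup_K u ≤ c. -/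
open MeasureTheory Filter Metric

/-!
Let `A t` be the mean of `u` over the circle of radius `exp t` around `x`. In log-polar coordinates
`r² Δ` is `∂²/∂t² + ∂²/∂θ²` and the angular part has mean zero, so the second derivative of `A` is
`exp (2 t)` times the mean of `Δu`. Since `Δu ≤ -a e^u`, Jensen gives `∂²w ≤ -a e^w` for
`w t = A t + 2 t`: once `w` is nonpositive with slope at most `2`, this concavity bounds the length
of any interval starting there at whose endpoints `w ≥ -C`.

At the right end of the interval, of fixed radius, `w` is bounded below because `u` is, by the
minimum principle. At the left end, of radius `exp (-u x / 2)`, one needs `A ≥ u x - b`, which the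
mean value inequality provides as soon as `u ≤ u x + log 4` on a larger disc. A point `x` with this
property and `u x ≥ u p` is found by maximising `e^{u/2}` times the distance to the boundary of a
disc around `p`. The interval then has length about `u x / 2`, so `u p ≤ u x` is bounded.
-/

section

open Real Set
open scoped Topology Interval

section OneVariable

theorem monotoneOn_Iio_of_convexOn {f : ℝ → ℝ} {τ : ℝ} (hf : ConvexOn ℝ (Iio τ) f)
    (hbdd : IsBoundedUnder (· ≤ ·) atBot f) : MonotoneOn f (Iio τ) := by
  intro x hx y hy hxy
  by_contra! hlt
  have hxy' : x < y := hxy.lt_of_ne (by rintro rfl; exact hlt.false)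
  set q := (f y - f x) / (y - x)
  have hq : q < 0 := div_neg_of_neg_of_pos (sub_neg.2 hlt) (sub_pos.2 hxy')
  have hline : ∀ᶠ z in atBot, f x + q * (z - x) ≤ f z := by
    filter_upwards [eventually_lt_atBot x] with z hz
    have hslope := hf.slope_mono_adjacent (hz.trans hx) hy hz hxy'
    rw [div_le_iff₀ (sub_pos.2 hz)] at hslope
    linarith
  have htop : Tendsto (fun z ↦ f x + q * (z - x)) atBot atTop :=
    tendsto_atTop_add_const_left _ _
      ((tendsto_atBot_add_const_right _ (-x) tendsto_id).const_mul_atBot_of_neg hq)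
  exact not_isBoundedUnder_of_tendsto_atTop (tendsto_atTop_mono' _ hline htop) hbdd

theorem le_of_monotoneOn_Iio_of_tendsto_atBot {α β : Type*} [LinearOrder α] [Nonempty α]
    [TopologicalSpace β] [Preorder β] [ClosedIicTopology β] {f : α → β} {τ t : α} {L : β}
    (hf : MonotoneOn f (Iio τ)) (hL : Tendsto f atBot (𝓝 L)) (ht : t < τ) : L ≤ f t :=
  le_of_tendsto hL <| (eventually_le_atBot t).mono fun _ hs ↦ hf (hs.trans_lt ht) ht hs

theorem concaveOn_of_hasDerivAt2_nonpos {D : Set ℝ} (hD : Convex ℝ D) {f f' f'' : ℝ → ℝ}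
    (hf : ∀ t ∈ D, HasDerivAt f (f' t) t) (hf' : ∀ t ∈ D, HasDerivAt f' (f'' t) t)
    (hf'' : ∀ t ∈ D, f'' t ≤ 0) : ConcaveOn ℝ D f :=
  concaveOn_of_hasDerivWithinAt2_nonpos hD
    (fun t ht ↦ (hf t ht).continuousAt.continuousWithinAt)
    (fun t ht ↦ (hf t (interior_subset ht)).hasDerivWithinAt)
    (fun t ht ↦ (hf' t (interior_subset ht)).hasDerivWithinAt)
    (fun t ht ↦ hf'' t (interior_subset ht))

theorem le_quadratic_of_deriv2_le {w w' w'' : ℝ → ℝ} {k t₀ t₁ : ℝ} (h01 : t₀ ≤ t₁)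
    (hw : ∀ t ∈ Icc t₀ t₁, HasDerivAt w (w' t) t)
    (hw' : ∀ t ∈ Icc t₀ t₁, HasDerivAt w' (w'' t) t)
    (hk : ∀ t ∈ Icc t₀ t₁, w'' t ≤ -k) :
    w t₁ ≤ w t₀ + w' t₀ * (t₁ - t₀) - k / 2 * (t₁ - t₀) ^ 2 := by
  rcases h01.eq_or_lt with rfl | h01
  · simp
  have hg : ∀ t ∈ Icc t₀ t₁, HasDerivAt (fun t ↦ w t + k / 2 * (t - t₀) ^ 2)
      (w' t + k * (t - t₀)) t := fun t ht ↦ by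
    refine ((hw t ht).fun_add
      ((((hasDerivAt_id' t).sub_const t₀).fun_pow 2).const_mul (k / 2))).congr_deriv ?_
    norm_num
    ring
  have hg' : ∀ t ∈ Icc t₀ t₁, HasDerivAt (fun t ↦ w' t + k * (t - t₀)) (w'' t + k) t :=
    fun t ht ↦ by
    simpa using (hw' t ht).fun_add (((hasDerivAt_id' t).sub_const t₀).const_mul k)
  have hconc : ConcaveOn ℝ (Icc t₀ t₁) fun t ↦ w t + k / 2 * (t - t₀) ^ 2 :=
    concaveOn_of_hasDerivAt2_nonpos (convex_Icc _ _) hg hg' fun t ht ↦ by linarith [hk t ht]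
  have hslope := hconc.slope_le_of_hasDerivAt (left_mem_Icc.2 h01.le) (right_mem_Icc.2 h01.le) h01
    (hg t₀ (left_mem_Icc.2 h01.le))
  rw [slope_def_field, div_le_iff₀ (sub_pos.2 h01)] at hslope
  linarith

theorem length_le_of_deriv2_le_neg_exp {w w' w'' : ℝ → ℝ} {a m C t₀ t₁ : ℝ}
    (ha : 0 < a) (hw : ∀ t ∈ Icc t₀ t₁, HasDerivAt w (w' t) t)
    (hw' : ∀ t ∈ Icc t₀ t₁, HasDerivAt w' (w'' t) t)
    (hexp : ∀ t ∈ Icc t₀ t₁, w'' t ≤ -(a * exp (w t)))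
    (hslope : w' t₀ ≤ m) (h₀ : w t₀ ≤ 0) (hC₀ : -C ≤ w t₀) (hC₁ : -C ≤ w t₁) :
    t₁ - t₀ ≤ max 1 (2 * (m + C) / (a * exp (-C))) := by
  rcases lt_or_ge (t₁ - t₀) 1 with hlt | hge
  · exact hlt.le.trans (le_max_left _ _)
  have h01 : t₀ ≤ t₁ := by linarith
  have hconc : ConcaveOn ℝ (Icc t₀ t₁) w :=
    concaveOn_of_hasDerivAt2_nonpos (convex_Icc _ _) hw hw' fun t ht ↦
      (hexp t ht).trans (neg_nonpos.2 (by positivity))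
  have hlow : ∀ t ∈ Icc t₀ t₁, -C ≤ w t := fun t ht ↦
    (le_min hC₀ hC₁).trans <|
      hconc.min_le_of_mem_Icc (left_mem_Icc.2 h01) (right_mem_Icc.2 h01) ht
  have hquad := le_quadratic_of_deriv2_le (k := a * exp (-C)) h01 hw hw' fun t ht ↦
    (hexp t ht).trans <| neg_le_neg <| by gcongr; exact hlow t ht
  refine le_max_of_le_right ((le_div_iff₀ (by positivity)).2 ?_)
  have hC : 0 ≤ C := by linarith
  have hlin : w' t₀ * (t₁ - t₀) + C ≤ (m + C) * (t₁ - t₀) := by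
    linarith [mul_le_mul_of_nonneg_right hslope (zero_le_one.trans hge),
      mul_le_mul_of_nonneg_left hge hC]
  have hprod : (t₁ - t₀) * (a * exp (-C)) * (t₁ - t₀) ≤ 2 * (m + C) * (t₁ - t₀) := by linarith
  exact le_of_mul_le_mul_right hprod (by linarith)

theorem hasDerivAt_intervalAverage {E : Type*} [NormedAddCommGroup E] [NormedSpace ℝ E]
    {W W' : ℝ → ℝ → E} {s : Set ℝ} {a b t : ℝ}
    (hs : IsOpen s) (ht : t ∈ s)
    (hW : ∀ r ∈ s, ∀ θ, HasDerivAt (fun r ↦ W r θ) (W' r θ) r)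
    (hWc : ∀ r ∈ s, Continuous (W r))
    (hW' : ContinuousOn (fun p : ℝ × ℝ ↦ W' p.1 p.2) (s ×ˢ univ)) :
    HasDerivAt (fun r ↦ ⨍ θ in a..b, W r θ) (⨍ θ in a..b, W' t θ) t := by
  obtain ⟨k, hk, htk, hks⟩ := exists_compact_subset hs ht
  obtain ⟨M, hM⟩ := (hk.prod isCompact_uIcc).exists_bound_of_continuousOn
    (hW'.mono (prod_mono hks (subset_univ [[a, b]])))
  have hk_nhds : k ∈ 𝓝 t := mem_interior_iff_mem_nhds.1 htk
  have hslice : Continuous (W' t) :=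
    hW'.comp_continuous (Continuous.prodMk_right t) fun θ ↦ ⟨ht, mem_univ θ⟩
  simp only [interval_average_eq]
  refine HasDerivAt.fun_const_smul (b - a)⁻¹
    (intervalIntegral.hasDerivAt_integral_of_dominated_loc_of_deriv_le (F := W) (F' := W')
      (bound := fun _ ↦ M) hk_nhds ?_ ?_ hslice.aestronglyMeasurable ?_ ?_ ?_).2
  · filter_upwards [hs.mem_nhds ht] with r hr using (hWc r hr).aestronglyMeasurable
  · exact (hWc t ht).intervalIntegrable _ _
  · exact Eventually.of_forall fun θ hθ r hr ↦ hM (r, θ) ⟨hr, uIoc_subset_uIcc hθ⟩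
  · exact intervalIntegrable_const
  · exact Eventually.of_forall fun θ _ r hr ↦ hW r (hks hr) θ

end OneVariable

section SecondDerivative
variable {E F : Type*} [NormedAddCommGroup E] [NormedSpace ℝ E]
  [NormedAddCommGroup F] [NormedSpace ℝ F]

theorem hasDerivAt_fderiv_comp_apply {u : E → F} {γ γ' : ℝ → E} {γ'' : E} {s : ℝ}
    (hu : DifferentiableAt ℝ (fderiv ℝ u) (γ s))
    (hγ : HasDerivAt γ (γ' s) s) (hγ' : HasDerivAt γ' γ'' s) :
    HasDerivAt (fun r ↦ fderiv ℝ u (γ r) (γ' r))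
      (fderiv ℝ (fderiv ℝ u) (γ s) (γ' s) (γ' s) + fderiv ℝ u (γ s) γ'') s :=
  (hu.hasFDerivAt.comp_hasDerivAt s hγ).clm_apply hγ'

theorem fderiv_fderiv_apply_self_nonneg_of_isLocalMin {u : E → ℝ} {x : E}
    (hd : ∀ᶠ y in 𝓝 x, DifferentiableAt ℝ u y) (hu : DifferentiableAt ℝ (fderiv ℝ u) x)
    (hmin : IsLocalMin u x) (v : E) : 0 ≤ fderiv ℝ (fderiv ℝ u) x v v := by
  set g : ℝ → ℝ := fun s ↦ u (x + s • v) with hg_def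
  have hline : ∀ s : ℝ, HasDerivAt (fun s : ℝ ↦ x + s • v) v s := fun s ↦ by
    simpa using ((hasDerivAt_id' s).smul_const v).const_add x
  have hline_tendsto : Tendsto (fun s : ℝ ↦ x + s • v) (𝓝 0) (𝓝 x) := by
    simpa using (hline 0).continuousAt.tendsto
  have hg : ∀ᶠ s in 𝓝 (0 : ℝ), HasDerivAt g (fderiv ℝ u (x + s • v) v) s :=
    (hline_tendsto.eventually hd).mono fun s hs ↦ hs.hasFDerivAt.comp_hasDerivAt s (hline s)
  have hg' : deriv g =ᶠ[𝓝 0] fun s ↦ fderiv ℝ u (x + s • v) v := hg.mono fun s hs ↦ hs.deriv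
  have hg'' : deriv (deriv g) 0 = fderiv ℝ (fderiv ℝ u) x v v := by
    rw [hg'.deriv_eq]
    have := hasDerivAt_fderiv_comp_apply (u := u) (γ := fun s : ℝ ↦ x + s • v)
      (γ' := fun _ ↦ v) (s := 0) (by simpa using hu) (hline 0) (hasDerivAt_const 0 v)
    simpa using this.deriv
  have hg_min : IsLocalMin g 0 := by
    simpa [IsLocalMin, IsMinFilter, hg_def] using hline_tendsto.eventually hmin
  by_contra! hneg
  have hg_max : IsLocalMax g 0 := isLocalMax_of_deriv_deriv_neg (hg''.trans_lt hneg)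
    hg_min.deriv_eq_zero hg.self_of_nhds.continuousAt
  have hg_const : g =ᶠ[𝓝 0] fun _ ↦ g 0 :=
    hg_min.and hg_max |>.mono fun s hs ↦ hs.2.antisymm hs.1
  have hzero : deriv (deriv g) 0 = 0 := by
    rw [hg_const.deriv.deriv_eq]; simp
  linarith

theorem continuousOn_fderiv_fderiv {u : E → F} {U : Set E} (hU : IsOpen U)
    (hu : ContDiffOn ℝ 2 u U) : ContinuousOn (fderiv ℝ (fderiv ℝ u)) U :=
  (hu.fderiv_of_isOpen hU (m := 1) (by norm_num)).continuousOn_fderiv_of_isOpen hU le_rfl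

theorem differentiableAt_fderiv {u : E → F} {U : Set E} (hU : IsOpen U)
    (hu : ContDiffOn ℝ 2 u U) {y : E} (hy : y ∈ U) : DifferentiableAt ℝ (fderiv ℝ u) y :=
  ((hu.fderiv_of_isOpen hU (m := 1) (by norm_num)).differentiableOn one_ne_zero).differentiableAt
    (hU.mem_nhds hy)

end SecondDerivative

section Laplacian

theorem lapl_eq_of_differentiableAt_fderiv {u : E2 → ℝ} {y : E2}
    (hu : DifferentiableAt ℝ (fderiv ℝ u) y) :
    lapl u y =
      fderiv ℝ (fderiv ℝ u) y (EuclideanSpace.single 0 1) (EuclideanSpace.single 0 1) +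
      fderiv ℝ (fderiv ℝ u) y (EuclideanSpace.single 1 1) (EuclideanSpace.single 1 1) := by
  have hpd : ∀ j, pd j (pd j u) y =
      fderiv ℝ (fderiv ℝ u) y (EuclideanSpace.single j 1) (EuclideanSpace.single j 1) := fun j ↦ by
    change fderiv ℝ (fun z ↦ fderiv ℝ u z (EuclideanSpace.single j 1)) y _ = _
    rw [fderiv_clm_apply hu (differentiableAt_const _)]
    simp
  rw [lapl, hpd, hpd]

theorem lapl_neg (u : E2 → ℝ) (x : E2) : lapl (fun y ↦ -u y) x = -lapl u x := by
  have hpd : ∀ (j : Fin 2) (v : E2 → ℝ), pd j (fun y ↦ -v y) = fun y ↦ -pd j v y :=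
    fun j v ↦ by ext y; simp [pd]
  simp only [lapl, hpd]
  ring

theorem lapl_nonneg_of_isLocalMin {u : E2 → ℝ} {x : E2} (hu : ContDiffAt ℝ 2 u x)
    (hmin : IsLocalMin u x) : 0 ≤ lapl u x := by
  have hd : ∀ᶠ y in 𝓝 x, DifferentiableAt ℝ u y :=
    (hu.eventually (by simp)).mono fun y hy ↦ hy.differentiableAt two_ne_zero
  have hu' : DifferentiableAt ℝ (fderiv ℝ u) x :=
    (hu.fderiv_right (m := 1) (by norm_num)).differentiableAt one_ne_zero
  rw [lapl_eq_of_differentiableAt_fderiv hu']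
  exact add_nonneg (fderiv_fderiv_apply_self_nonneg_of_isLocalMin hd hu' hmin _)
    (fderiv_fderiv_apply_self_nonneg_of_isLocalMin hd hu' hmin _)

theorem le_of_lapl_neg_of_le_frontier {Ω : Set E2} (hΩo : IsOpen Ω) (hΩb : Bornology.IsBounded Ω)
    {u : E2 → ℝ} {m : ℝ} (huc : ContinuousOn u (closure Ω)) (hu : ContDiffOn ℝ 2 u Ω)
    (hlapl : ∀ x ∈ Ω, lapl u x < 0) (hm : ∀ x ∈ frontier Ω, m ≤ u x) {x : E2} (hx : x ∈ Ω) :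
    m ≤ u x := by
  obtain ⟨y, hy, hmin⟩ :=
    hΩb.isCompact_closure.exists_isMinOn ⟨x, subset_closure hx⟩ huc
  have hyΩ : y ∉ Ω := fun hyΩ ↦ (hlapl y hyΩ).not_ge <|
    lapl_nonneg_of_isLocalMin (hu.contDiffAt (hΩo.mem_nhds hyΩ))
      (hmin.isLocalMin (mem_of_superset (hΩo.mem_nhds hyΩ) subset_closure))
  have hyf : y ∈ frontier Ω := by rw [hΩo.frontier_eq]; exact ⟨hy, hyΩ⟩
  exact (hm y hyf).trans (hmin (subset_closure hx))

theorem continuousOn_lapl {u : E2 → ℝ} {U : Set E2} (hU : IsOpen U) (hu : ContDiffOn ℝ 2 u U) :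
    ContinuousOn (lapl u) U := by
  have hc := continuousOn_fderiv_fderiv hU hu
  exact (((hc.clm_apply continuousOn_const).clm_apply continuousOn_const).add
    ((hc.clm_apply continuousOn_const).clm_apply continuousOn_const)).congr fun y hy ↦
    lapl_eq_of_differentiableAt_fderiv (differentiableAt_fderiv hU hu hy)

end Laplacian

section LogPolar

/-- The unit vector `e_r = (cos θ, sin θ)`. -/
noncomputable def radialDir (θ : ℝ) : E2 :=
  cos θ • EuclideanSpace.single 0 1 + sin θ • EuclideanSpace.single 1 1

/-- The unit vector `e_θ = (-sin θ, cos θ)`, the derivative of `radialDir`. -/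
noncomputable def angularDir (θ : ℝ) : E2 :=
  -sin θ • EuclideanSpace.single 0 1 + cos θ • EuclideanSpace.single 1 1

/-- Log-polar coordinates centred at `x`: the point at angle `θ` of the circle of radius `exp t`. -/
noncomputable def logPolar (x : E2) (t θ : ℝ) : E2 :=
  x + exp t • radialDir θ

theorem hasDerivAt_radialDir (θ : ℝ) : HasDerivAt radialDir (angularDir θ) θ :=
  ((hasDerivAt_cos θ).smul_const _).fun_add ((hasDerivAt_sin θ).smul_const _)

theorem hasDerivAt_angularDir (θ : ℝ) : HasDerivAt angularDir (-radialDir θ) θ := by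
  refine (((hasDerivAt_sin θ).fun_neg.smul_const _).fun_add
    ((hasDerivAt_cos θ).smul_const _)).congr_deriv ?_
  rw [radialDir, neg_add, neg_smul, neg_smul]

theorem norm_radialDir (θ : ℝ) : ‖radialDir θ‖ = 1 := by
  simp [radialDir, EuclideanSpace.norm_eq]

theorem fderiv_fderiv_radial_add_angular_eq_lapl {u : E2 → ℝ} {y : E2}
    (hu : DifferentiableAt ℝ (fderiv ℝ u) y) (θ : ℝ) :
    fderiv ℝ (fderiv ℝ u) y (radialDir θ) (radialDir θ) +
      fderiv ℝ (fderiv ℝ u) y (angularDir θ) (angularDir θ) = lapl u y := by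
  rw [lapl_eq_of_differentiableAt_fderiv hu]
  simp only [radialDir, angularDir, map_add, map_smul, add_apply, smul_apply, smul_eq_mul]
  linear_combination (fderiv ℝ (fderiv ℝ u) y (EuclideanSpace.single 0 1)
    (EuclideanSpace.single 0 1) + fderiv ℝ (fderiv ℝ u) y (EuclideanSpace.single 1 1)
    (EuclideanSpace.single 1 1)) * sin_sq_add_cos_sq θ

theorem hasDerivAt_logPolar_left (x : E2) (t θ : ℝ) :
    HasDerivAt (fun t ↦ logPolar x t θ) (exp t • radialDir θ) t :=
  ((hasDerivAt_exp t).smul_const _).const_add x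

theorem hasDerivAt_logPolar_right (x : E2) (t θ : ℝ) :
    HasDerivAt (logPolar x t) (exp t • angularDir θ) θ :=
  ((hasDerivAt_radialDir θ).const_smul (exp t)).const_add x

theorem continuous_radialDir : Continuous radialDir := by
  unfold radialDir; fun_prop

theorem continuous_angularDir : Continuous angularDir := by
  unfold angularDir; fun_prop

theorem continuous_logPolar (x : E2) : Continuous fun p : ℝ × ℝ ↦ logPolar x p.1 p.2 :=
  continuous_const.add <|
    (continuous_exp.comp continuous_fst).smul (continuous_radialDir.comp continuous_snd)

theorem logPolar_mem_sphere (x : E2) (t θ : ℝ) : logPolar x t θ ∈ sphere x (exp t) := by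
  simp [logPolar, norm_smul, norm_radialDir]

theorem logPolar_mem_ball (x : E2) {t τ : ℝ} (ht : t < τ) (θ : ℝ) :
    logPolar x t θ ∈ ball x (exp τ) :=
  sphere_subset_ball (exp_lt_exp.2 ht) (logPolar_mem_sphere x t θ)

theorem radialDir_two_pi : radialDir (2 * π) = radialDir 0 := by simp [radialDir]

theorem angularDir_two_pi : angularDir (2 * π) = angularDir 0 := by simp [angularDir]

/-- The mean of `v` over the circle of radius `exp t` around `x`. The logarithm of the radius is
the variable because it turns `r² Δ` into `∂²/∂t² + ∂²/∂θ²`. -/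
noncomputable def logCircleAverage (v : E2 → ℝ) (x : E2) (t : ℝ) : ℝ :=
  ⨍ θ in (0)..(2 * π), v (logPolar x t θ)

/-- The mean of `r ∂u/∂r` over the circle of radius `r = exp t` around `x`. -/
noncomputable def logCircleFlux (u : E2 → ℝ) (x : E2) (t : ℝ) : ℝ :=
  ⨍ θ in (0)..(2 * π), fderiv ℝ u (logPolar x t θ) (exp t • radialDir θ)

/-- The second derivative of `u` along the rays of log-polar coordinates, `∂²/∂t²`, where
`u` is twice differentiable. -/
noncomputable def radialDeriv2 (u : E2 → ℝ) (x : E2) (t θ : ℝ) : ℝ :=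
  fderiv ℝ (fderiv ℝ u) (logPolar x t θ) (exp t • radialDir θ) (exp t • radialDir θ) +
    fderiv ℝ u (logPolar x t θ) (exp t • radialDir θ)

/-- The second derivative of `u` along the circles of log-polar coordinates, `∂²/∂θ²`, where
`u` is twice differentiable. -/
noncomputable def angularDeriv2 (u : E2 → ℝ) (x : E2) (t θ : ℝ) : ℝ :=
  fderiv ℝ (fderiv ℝ u) (logPolar x t θ) (exp t • angularDir θ) (exp t • angularDir θ) +
    fderiv ℝ u (logPolar x t θ) (exp t • -radialDir θ)

end LogPolar

section LogCircleAverage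
variable {u v w : E2 → ℝ} {x : E2} {t τ θ : ℝ}

theorem continuous_comp_logPolar {F : Type*} [TopologicalSpace F] {v : E2 → F}
    (hv : ContinuousOn v (sphere x (exp t))) :
    Continuous fun θ ↦ v (logPolar x t θ) :=
  hv.comp_continuous ((continuous_logPolar x).comp (Continuous.prodMk_right t))
    (logPolar_mem_sphere x t)

theorem continuousOn_comp_logPolar {F : Type*} [TopologicalSpace F] {v : E2 → F}
    (hv : ContinuousOn v (ball x (exp τ))) :
    ContinuousOn (fun p : ℝ × ℝ ↦ v (logPolar x p.1 p.2)) (Iio τ ×ˢ univ) :=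
  hv.comp (continuous_logPolar x).continuousOn fun p hp ↦ logPolar_mem_ball x hp.1 p.2

theorem exists_mem_sphere_eq_logCircleAverage (hv : ContinuousOn v (sphere x (exp t))) :
    ∃ y ∈ sphere x (exp t), v y = logCircleAverage v x t := by
  obtain ⟨θ, -, hθ⟩ := exists_eq_interval_average two_pi_pos.ne
    (continuous_comp_logPolar hv).continuousOn
  exact ⟨_, logPolar_mem_sphere x t θ, hθ⟩

theorem le_logCircleAverage_of_forall_le {m : ℝ} (hv : ContinuousOn v (sphere x (exp t)))
    (hm : ∀ y ∈ sphere x (exp t), m ≤ v y) : m ≤ logCircleAverage v x t := by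
  obtain ⟨y, hy, hvy⟩ := exists_mem_sphere_eq_logCircleAverage hv
  exact hvy ▸ hm y hy

theorem logCircleAverage_mono (hv : ContinuousOn v (sphere x (exp t)))
    (hw : ContinuousOn w (sphere x (exp t))) (hvw : ∀ y ∈ sphere x (exp t), v y ≤ w y) :
    logCircleAverage v x t ≤ logCircleAverage w x t := by
  simp only [logCircleAverage, interval_average_eq]
  have hint : ∫ θ in 0..2 * π, v (logPolar x t θ) ≤ ∫ θ in 0..2 * π, w (logPolar x t θ) :=
    intervalIntegral.integral_mono two_pi_pos.le
      ((continuous_comp_logPolar hv).intervalIntegrable _ _)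
      ((continuous_comp_logPolar hw).intervalIntegrable _ _)
      fun θ ↦ hvw _ (logPolar_mem_sphere x t θ)
  exact smul_le_smul_of_nonneg_left hint (inv_nonneg.2 (by simp [pi_nonneg]))

theorem logCircleAverage_const_mul (c : ℝ) (v : E2 → ℝ) (x : E2) (t : ℝ) :
    logCircleAverage (fun y ↦ c * v y) x t = c * logCircleAverage v x t := by
  simp only [logCircleAverage, interval_average_eq, intervalIntegral.integral_const_mul,
    smul_eq_mul]
  ring

theorem logCircleAverage_neg (v : E2 → ℝ) (x : E2) (t : ℝ) :
    logCircleAverage (fun y ↦ -v y) x t = -logCircleAverage v x t := by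
  rw [← neg_one_mul (logCircleAverage v x t), ← logCircleAverage_const_mul]
  simp only [neg_one_mul]

theorem exp_logCircleAverage_le (hv : ContinuousOn v (sphere x (exp t))) :
    exp (logCircleAverage v x t) ≤ logCircleAverage (fun y ↦ exp (v y)) x t := by
  have hc := continuous_comp_logPolar hv
  refine convexOn_exp.map_set_average_le (t := Ι 0 (2 * π))
    continuous_exp.continuousOn isClosed_univ ?_ (by simp [uIoc]) (by simp)
    (hc.integrableOn_uIoc) ((continuous_exp.comp hc).integrableOn_uIoc)
  simp [uIoc_of_le two_pi_pos.le, pi_pos]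

theorem tendsto_logCircleAverage_atBot (hv : ContinuousOn v (ball x (exp τ))) :
    Tendsto (logCircleAverage v x) atBot (𝓝 (v x)) := by
  have hvx : ContinuousAt v x := hv.continuousAt (ball_mem_nhds x (exp_pos τ))
  refine Metric.tendsto_nhds.2 fun ε hε ↦ ?_
  obtain ⟨δ, hδ, hvδ⟩ := Metric.continuousAt_iff.1 hvx ε hε
  filter_upwards [eventually_lt_atBot τ, tendsto_exp_atBot.eventually_lt_const hδ] with t ht hexp
  obtain ⟨y, hy, hvy⟩ := exists_mem_sphere_eq_logCircleAverage
    (hv.mono (sphere_subset_ball (exp_lt_exp.2 ht)))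
  exact hvy ▸ hvδ ((mem_sphere.1 hy).trans_lt hexp)

theorem tendsto_logCircleAverage_add_exp (hv : ContinuousOn v (ball x (exp τ))) (k : ℝ) :
    Tendsto (fun t ↦ logCircleAverage v x t + k * exp (2 * t)) atBot (𝓝 (v x)) := by
  have hexp : Tendsto (fun t : ℝ ↦ exp (2 * t)) atBot (𝓝 0) :=
    tendsto_exp_atBot.comp (tendsto_id.const_mul_atBot two_pos)
  simpa using (tendsto_logCircleAverage_atBot hv).add (hexp.const_mul k)

theorem hasDerivAt_logCircleAverage (hu : ContDiffOn ℝ 2 u (ball x (exp τ))) (ht : t < τ) :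
    HasDerivAt (logCircleAverage u x) (logCircleFlux u x t) t := by
  have hD := continuousOn_comp_logPolar (hu.continuousOn_fderiv_of_isOpen isOpen_ball one_le_two)
  have := continuous_radialDir
  refine hasDerivAt_intervalAverage (W := fun r θ ↦ u (logPolar x r θ))
    (W' := fun r θ ↦ fderiv ℝ u (logPolar x r θ) (exp r • radialDir θ))
    isOpen_Iio ht (fun r hr θ ↦ ?_) (fun r hr ↦ ?_) ?_
  · have hd : DifferentiableAt ℝ u (logPolar x r θ) :=
      (hu.differentiableOn two_ne_zero).differentiableAt
        (isOpen_ball.mem_nhds (logPolar_mem_ball x hr θ))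
    exact hd.hasFDerivAt.comp_hasDerivAt r (hasDerivAt_logPolar_left x r θ)
  · exact continuous_comp_logPolar (hu.continuousOn.mono (sphere_subset_ball (exp_lt_exp.2 hr)))
  · fun_prop

theorem continuous_angularDeriv2 (hu : ContDiffOn ℝ 2 u (ball x (exp τ))) (ht : t < τ) :
    Continuous (angularDeriv2 u x t) := by
  have hsphere : sphere x (exp t) ⊆ ball x (exp τ) := sphere_subset_ball (exp_lt_exp.2 ht)
  have hD := continuous_comp_logPolar
    ((hu.continuousOn_fderiv_of_isOpen isOpen_ball one_le_two).mono hsphere)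
  have hD2 := continuous_comp_logPolar ((continuousOn_fderiv_fderiv isOpen_ball hu).mono hsphere)
  have := continuous_radialDir
  have := continuous_angularDir
  unfold angularDeriv2
  fun_prop

theorem integral_angularDeriv2_eq_zero (hu : ContDiffOn ℝ 2 u (ball x (exp τ))) (ht : t < τ) :
    ∫ θ in 0..2 * π, angularDeriv2 u x t θ = 0 := by
  have hderiv : ∀ θ, HasDerivAt (fun θ ↦ fderiv ℝ u (logPolar x t θ) (exp t • angularDir θ))
      (angularDeriv2 u x t θ) θ := fun θ ↦
    hasDerivAt_fderiv_comp_apply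
      (differentiableAt_fderiv isOpen_ball hu (logPolar_mem_ball x ht θ))
      (hasDerivAt_logPolar_right x t θ) ((hasDerivAt_angularDir θ).const_smul (exp t))
  rw [intervalIntegral.integral_eq_sub_of_hasDerivAt (fun θ _ ↦ hderiv θ)
    ((continuous_angularDeriv2 hu ht).intervalIntegrable _ _), sub_eq_zero]
  simp only [logPolar, radialDir_two_pi, angularDir_two_pi]

theorem radialDeriv2_add_angularDeriv2 (hu : DifferentiableAt ℝ (fderiv ℝ u) (logPolar x t θ)) :
    radialDeriv2 u x t θ + angularDeriv2 u x t θ = exp (2 * t) * lapl u (logPolar x t θ) := by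
  rw [← fderiv_fderiv_radial_add_angular_eq_lapl hu θ, radialDeriv2, angularDeriv2, two_mul,
    exp_add]
  simp only [smul_neg, map_neg, map_smul, smul_apply, smul_eq_mul]
  ring

theorem hasDerivAt_logCircleFlux_radialDeriv2 (hu : ContDiffOn ℝ 2 u (ball x (exp τ)))
    (ht : t < τ) :
    HasDerivAt (logCircleFlux u x) (⨍ θ in (0)..(2 * π), radialDeriv2 u x t θ) t := by
  have hD := continuousOn_comp_logPolar (hu.continuousOn_fderiv_of_isOpen isOpen_ball one_le_two)
  have hD2 := continuousOn_comp_logPolar (continuousOn_fderiv_fderiv isOpen_ball hu)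
  have := continuous_radialDir
  refine hasDerivAt_intervalAverage
    (W := fun r θ ↦ fderiv ℝ u (logPolar x r θ) (exp r • radialDir θ))
    isOpen_Iio ht (fun r hr θ ↦ ?_) (fun r hr ↦ ?_) ?_
  · exact hasDerivAt_fderiv_comp_apply
      (differentiableAt_fderiv isOpen_ball hu (logPolar_mem_ball x hr θ))
      (hasDerivAt_logPolar_left x r θ) ((hasDerivAt_exp r).smul_const _)
  · have hDr := continuous_comp_logPolar
      ((hu.continuousOn_fderiv_of_isOpen isOpen_ball one_le_two).mono
        (sphere_subset_ball (exp_lt_exp.2 hr)))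
    fun_prop
  · unfold radialDeriv2
    fun_prop

theorem hasDerivAt_logCircleFlux (hu : ContDiffOn ℝ 2 u (ball x (exp τ))) (ht : t < τ) :
    HasDerivAt (logCircleFlux u x) (exp (2 * t) * logCircleAverage (lapl u) x t) t := by
  refine (hasDerivAt_logCircleFlux_radialDeriv2 hu ht).congr_deriv ?_
  have hlapl := continuous_comp_logPolar
    ((continuousOn_lapl isOpen_ball hu).mono (sphere_subset_ball (exp_lt_exp.2 ht)))
  have hradial : radialDeriv2 u x t = fun θ ↦
      exp (2 * t) * lapl u (logPolar x t θ) - angularDeriv2 u x t θ := funext fun θ ↦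
    eq_sub_of_add_eq <| radialDeriv2_add_angularDeriv2
      (differentiableAt_fderiv isOpen_ball hu (logPolar_mem_ball x ht θ))
  rw [← logCircleAverage_const_mul, logCircleAverage, interval_average_eq, interval_average_eq,
    hradial, intervalIntegral.integral_sub ((hlapl.const_mul _).intervalIntegrable _ _)
      ((continuous_angularDeriv2 hu ht).intervalIntegrable _ _),
    integral_angularDeriv2_eq_zero hu ht, sub_zero, sub_zero]

end LogCircleAverage

section MeanValue
variable {u : E2 → ℝ} {x : E2} {k t τ : ℝ}

-- `k * exp (2 * t) = k r²` is a radial function with Laplacian `4 * k`.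
theorem monotoneOn_logCircleAverage_add_exp (hu : ContDiffOn ℝ 2 u (ball x (exp τ)))
    (hlapl : ∀ y ∈ ball x (exp τ), -(4 * k) ≤ lapl u y) :
    MonotoneOn (fun t ↦ logCircleAverage u x t + k * exp (2 * t)) (Iio τ) := by
  have hexp : ∀ t, HasDerivAt (fun t ↦ exp (2 * t)) (2 * exp (2 * t)) t := fun t ↦ by
    simpa [mul_comm] using ((hasDerivAt_id' t).const_mul 2).exp
  have hf : ∀ t ∈ Iio τ, HasDerivAt (fun t ↦ logCircleAverage u x t + k * exp (2 * t))
      (logCircleFlux u x t + k * (2 * exp (2 * t))) t := fun t ht ↦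
    (hasDerivAt_logCircleAverage hu ht).fun_add ((hexp t).const_mul k)
  have hf' : ∀ t ∈ Iio τ, HasDerivAt (fun t ↦ logCircleFlux u x t + k * (2 * exp (2 * t)))
      (exp (2 * t) * (logCircleAverage (lapl u) x t + 4 * k)) t := fun t ht ↦
    ((hasDerivAt_logCircleFlux hu ht).fun_add
      (((hexp t).const_mul 2).const_mul k)).congr_deriv (by ring)
  refine monotoneOn_Iio_of_convexOn (convexOn_of_hasDerivWithinAt2_nonneg (convex_Iio τ)
    (fun t ht ↦ (hf t ht).continuousAt.continuousWithinAt)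
    (fun t ht ↦ (hf t (interior_subset ht)).hasDerivWithinAt)
    (fun t ht ↦ (hf' t (interior_subset ht)).hasDerivWithinAt) fun t ht ↦ ?_)
    (tendsto_logCircleAverage_add_exp hu.continuousOn k).isBoundedUnder_le
  rw [interior_Iio] at ht
  have hsphere : sphere x (exp t) ⊆ ball x (exp τ) :=
    sphere_subset_ball (exp_lt_exp.2 ht)
  have havg : -(4 * k) ≤ logCircleAverage (lapl u) x t :=
    le_logCircleAverage_of_forall_le ((continuousOn_lapl isOpen_ball hu).mono hsphere)
      fun y hy ↦ hlapl y (hsphere hy)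
  exact mul_nonneg (exp_pos _).le (by linarith)

theorem le_logCircleAverage_add_exp (hu : ContDiffOn ℝ 2 u (ball x (exp τ)))
    (hlapl : ∀ y ∈ ball x (exp τ), -(4 * k) ≤ lapl u y) (ht : t < τ) :
    u x ≤ logCircleAverage u x t + k * exp (2 * t) :=
  le_of_monotoneOn_Iio_of_tendsto_atBot
    (f := fun t ↦ logCircleAverage u x t + k * exp (2 * t))
    (monotoneOn_logCircleAverage_add_exp hu hlapl)
    (tendsto_logCircleAverage_add_exp hu.continuousOn k) ht

theorem logCircleAverage_le_of_lapl_nonpos (hu : ContDiffOn ℝ 2 u (ball x (exp τ)))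
    (hlapl : ∀ y ∈ ball x (exp τ), lapl u y ≤ 0) (ht : t < τ) :
    logCircleAverage u x t ≤ u x := by
  have h := le_logCircleAverage_add_exp (k := 0) hu.neg
    (fun y hy ↦ by simpa [lapl_neg] using hlapl y hy) ht
  simpa [logCircleAverage_neg] using h

theorem logCircleFlux_nonpos_of_lapl_nonpos (hu : ContDiffOn ℝ 2 u (ball x (exp τ)))
    (hlapl : ∀ y ∈ ball x (exp τ), lapl u y ≤ 0) (ht : t < τ) :
    logCircleFlux u x t ≤ 0 := by
  have hmono := monotoneOn_logCircleAverage_add_exp (k := 0) hu.neg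
    fun y hy ↦ by simpa [lapl_neg] using hlapl y hy
  have hanti : AntitoneOn (logCircleAverage u x) (Iio τ) := fun r hr s hs hrs ↦ by
    simpa [logCircleAverage_neg] using hmono hr hs hrs
  exact (hasDerivAt_logCircleAverage hu ht).hasDerivWithinAt.nonpos_of_antitoneOn
    (isOpen_Iio.uniqueDiffWithinAt (𝕜 := ℝ) ht).accPt hanti

end MeanValue

section Liouville
variable {a b m C : ℝ} {u : E2 → ℝ} {U : Set E2} {x : E2} {s t τ : ℝ}

/-- `u` is a `C²` solution in `U` of `-Δu = V e^u` for some weight `V` with `a ≤ V ≤ b`; the weight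
is eliminated by bounding `-Δu` between multiples of `e^u`. -/
structure IsLiouvilleSolution (a b : ℝ) (u : E2 → ℝ) (U : Set E2) : Prop where
  contDiffOn : ContDiffOn ℝ 2 u U
  le_neg_lapl : ∀ y ∈ U, a * exp (u y) ≤ -lapl u y
  neg_lapl_le : ∀ y ∈ U, -lapl u y ≤ b * exp (u y)

namespace IsLiouvilleSolution

theorem of_eq_mul_exp {V : E2 → ℝ} (hu : ContDiffOn ℝ 2 u U)
    (hlapl : ∀ y ∈ U, -lapl u y = V y * exp (u y)) (hV : ∀ y ∈ U, a ≤ V y ∧ V y ≤ b) :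
    IsLiouvilleSolution a b u U where
  contDiffOn := hu
  le_neg_lapl y hy := hlapl y hy ▸ mul_le_mul_of_nonneg_right (hV y hy).1 (exp_pos _).le
  neg_lapl_le y hy := hlapl y hy ▸ mul_le_mul_of_nonneg_right (hV y hy).2 (exp_pos _).le

theorem mono {U' : Set E2} (hu : IsLiouvilleSolution a b u U) (h : U' ⊆ U) :
    IsLiouvilleSolution a b u U' :=
  ⟨hu.contDiffOn.mono h, fun y hy ↦ hu.le_neg_lapl y (h hy), fun y hy ↦ hu.neg_lapl_le y (h hy)⟩

theorem le_of_mem (hu : IsLiouvilleSolution a b u U) {y : E2} (hy : y ∈ U) :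
    a ≤ b :=
  le_of_mul_le_mul_right ((hu.le_neg_lapl y hy).trans (hu.neg_lapl_le y hy)) (exp_pos _)

theorem lapl_neg_of_pos (hu : IsLiouvilleSolution a b u U) (ha : 0 < a)
    {y : E2} (hy : y ∈ U) : lapl u y < 0 :=
  neg_pos.1 <| (mul_pos ha (exp_pos _)).trans_le (hu.le_neg_lapl y hy)

theorem logCircleAverage_lapl_le (hu : IsLiouvilleSolution a b u
    (ball x (exp τ))) (ha : 0 ≤ a) (ht : t < τ) :
    logCircleAverage (lapl u) x t ≤ -(a * exp (logCircleAverage u x t)) := by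
  have hsphere : sphere x (exp t) ⊆ ball x (exp τ) := sphere_subset_ball (exp_lt_exp.2 ht)
  have huc : ContinuousOn u (sphere x (exp t)) := hu.contDiffOn.continuousOn.mono hsphere
  calc logCircleAverage (lapl u) x t
      ≤ logCircleAverage (fun y ↦ -a * exp (u y)) x t := by
        refine logCircleAverage_mono ((continuousOn_lapl isOpen_ball hu.contDiffOn).mono hsphere)
          (continuousOn_const.mul huc.rexp) fun y hy ↦ ?_
        linarith [hu.le_neg_lapl y (hsphere hy)]
    _ = -(a * logCircleAverage (fun y ↦ exp (u y)) x t) := by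
        rw [logCircleAverage_const_mul, neg_mul]
    _ ≤ -(a * exp (logCircleAverage u x t)) :=
        neg_le_neg (mul_le_mul_of_nonneg_left (exp_logCircleAverage_le huc) ha)

theorem sub_le_logCircleAverage (hu : IsLiouvilleSolution a b u (ball x (exp τ))) (hb : 0 ≤ b)
    (hle : ∀ y ∈ ball x (exp τ), u y ≤ u x + log 4) (ht : -(u x / 2) < τ) :
    u x - b ≤ logCircleAverage u x (-(u x / 2)) := by
  have hlapl : ∀ y ∈ ball x (exp τ), -(4 * (b * exp (u x))) ≤ lapl u y := fun y hy ↦ by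
    have hexp : exp (u y) ≤ exp (u x) * 4 := by
      simpa [exp_add, exp_log] using exp_le_exp.2 (hle y hy)
    linarith [hu.neg_lapl_le y hy, mul_le_mul_of_nonneg_left hexp hb]
  have hmean := le_logCircleAverage_add_exp hu.contDiffOn hlapl ht
  have hcancel : u x + 2 * -(u x / 2) = 0 := by ring
  rw [mul_assoc, ← exp_add, hcancel, exp_zero, mul_one] at hmean
  linarith

theorem half_add_le (hu : IsLiouvilleSolution a b u (ball x (exp τ)))
    (ha : 0 < a) (hm : ∀ y ∈ ball x (exp τ), m ≤ u y) (hsτ : s ≤ τ)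
    (hle : ∀ y ∈ ball x (exp s), u y ≤ u x + log 4) (hs : -(u x / 2) < s) (ht : t < τ)
    (hbC : b ≤ C) (hmC : -(m + 2 * t) ≤ C) :
    u x / 2 + t ≤ max 1 (2 * (2 + C) / (a * exp (-C))) := by
  have hlapl : ∀ y ∈ ball x (exp τ), lapl u y ≤ 0 := fun y hy ↦ (hu.lapl_neg_of_pos ha hy).le
  have hsphere : sphere x (exp t) ⊆ ball x (exp τ) := sphere_subset_ball (exp_lt_exp.2 ht)
  have hstart : u x - b ≤ logCircleAverage u x (-(u x / 2)) :=
    (hu.mono (ball_subset_ball (exp_le_exp.2 hsτ))).sub_le_logCircleAverage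
      (ha.le.trans (hu.le_of_mem (mem_ball_self (exp_pos τ)))) hle hs
  have hend : m ≤ logCircleAverage u x t :=
    le_logCircleAverage_of_forall_le (hu.contDiffOn.continuousOn.mono hsphere)
      fun y hy ↦ hm y (hsphere hy)
  have hlt : ∀ r ∈ Icc (-(u x / 2)) t, r < τ := fun r hr ↦ hr.2.trans_lt ht
  have hlength := length_le_of_deriv2_le_neg_exp (w := fun r ↦ logCircleAverage u x r + 2 * r)
    (w' := fun r ↦ logCircleFlux u x r + 2)
    (w'' := fun r ↦ exp (2 * r) * logCircleAverage (lapl u) x r)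
    (m := 2) (C := C) (t₀ := -(u x / 2)) (t₁ := t) ha
    (fun r hr ↦ by
      simpa using (hasDerivAt_logCircleAverage hu.contDiffOn (hlt r hr)).fun_add
        ((hasDerivAt_id' r).const_mul 2))
    (fun r hr ↦ (hasDerivAt_logCircleFlux hu.contDiffOn (hlt r hr)).add_const 2)
    (fun r hr ↦ ?_) ?_ ?_ ?_ ?_
  · rwa [sub_neg_eq_add, add_comm] at hlength
  · rw [exp_add, mul_comm (exp (logCircleAverage u x r)), mul_left_comm, ← mul_neg]
    exact mul_le_mul_of_nonneg_left (hu.logCircleAverage_lapl_le ha.le (hlt r hr)) (exp_pos _).le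
  · linarith [logCircleFlux_nonpos_of_lapl_nonpos hu.contDiffOn hlapl (hs.trans_le hsτ)]
  · linarith [logCircleAverage_le_of_lapl_nonpos hu.contDiffOn hlapl (hs.trans_le hsτ)]
  · linarith
  · linarith

end IsLiouvilleSolution

end Liouville

section InteriorBound

theorem exists_mem_ball_forall_le_two_mul {X : Type*} [PseudoMetricSpace X] [ProperSpace X]
    {f : X → ℝ} {p : X} {R : ℝ} (hR : 0 < R) (hf : ContinuousOn f (closedBall p R)) (hp : 0 < f p) :
    ∃ x ∈ ball p R, ∃ σ ∈ Ioc 0 (R / 2), f p * R ≤ 2 * σ * f x ∧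
      ∀ y ∈ ball x σ, f y ≤ 2 * f x := by
  obtain ⟨x, hx, hmax⟩ := (isCompact_closedBall p R).exists_isMaxOn ⟨p, mem_closedBall_self hR.le⟩
    (hf.mul (continuousOn_const.sub (continuous_id.dist continuous_const).continuousOn) :
      ContinuousOn (fun y ↦ f y * (R - dist y p)) _)
  have hxp : f p * R ≤ f x * (R - dist x p) := by
    simpa using hmax (mem_closedBall_self hR.le)
  have hprod : 0 < f x * (R - dist x p) := (mul_pos hp hR).trans_le hxp
  have hgap : 0 < R - dist x p :=
    (sub_nonneg.2 hx).lt_of_ne' (right_ne_zero_of_mul hprod.ne')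
  have hfx : 0 < f x := pos_of_mul_pos_left hprod hgap.le
  refine ⟨x, mem_ball.2 (sub_pos.1 hgap), (R - dist x p) / 2,
    ⟨half_pos hgap, by linarith [dist_nonneg (x := x) (y := p)]⟩, by linarith, fun y hy ↦ ?_⟩
  have hyp : (R - dist x p) / 2 ≤ R - dist y p := by
    linarith [dist_triangle y x p, mem_ball.1 hy]
  rcases le_or_gt (f y) 0 with hfy | hfy
  · linarith
  have hymax : f y * (R - dist y p) ≤ f x * (R - dist x p) :=
    hmax (mem_closedBall.2 (by linarith))
  have : f y * ((R - dist x p) / 2) ≤ 2 * f x * ((R - dist x p) / 2) := by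
    linarith [mul_le_mul_of_nonneg_left hyp hfy.le]
  exact le_of_mul_le_mul_right this (half_pos hgap)

theorem exists_mem_ball_le_add_log_four {X : Type*} [PseudoMetricSpace X] [ProperSpace X]
    {u : X → ℝ} {p : X} {R : ℝ} (hR : 0 < R) (hu : ContinuousOn u (closedBall p R))
    (hp : 2 * log (2 / R) < u p) :
    ∃ x ∈ ball p R, ∃ s ≤ log R, u p ≤ u x ∧ -(u x / 2) < s ∧
      ∀ y ∈ ball x (exp s), u y ≤ u x + log 4 := by
  obtain ⟨x, hx, σ, ⟨hσ, hσR⟩, hpx, hdouble⟩ :=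
    exists_mem_ball_forall_le_two_mul hR (hu.div_const 2).rexp (exp_pos _)
  refine ⟨x, hx, log σ, log_le_log hσ (by linarith), ?_, ?_, fun y hy ↦ ?_⟩
  · have hexp : exp (u p / 2) * R ≤ exp (u x / 2) * R :=
      hpx.trans (by nlinarith [exp_pos (u x / 2)])
    linarith [exp_le_exp.1 (le_of_mul_le_mul_right hexp hR)]
  · have hp' : 2 < exp (u p / 2) * R := by
      rw [← div_lt_iff₀ hR, ← log_lt_iff_lt_exp (by positivity)]
      linarith
    rw [lt_log_iff_exp_lt hσ, exp_neg, inv_lt_iff_one_lt_mul₀ (exp_pos _)]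
    linarith
  · rw [exp_log hσ] at hy
    have hlog := log_le_log (exp_pos _) (hdouble y hy)
    rw [log_exp, log_mul two_ne_zero (exp_pos _).ne', log_exp] at hlog
    rw [show (4 : ℝ) = 2 ^ 2 by norm_num, log_pow]
    push_cast
    linarith

theorem exists_interior_bound {a R : ℝ} (ha : 0 < a) (hR : 0 < R) (b m : ℝ) :
    ∃ c, ∀ (u : E2 → ℝ) (p : E2), IsLiouvilleSolution a b u (ball p (2 * R)) →
      (∀ y ∈ ball p (2 * R), m ≤ u y) → u p ≤ c := by
  set t := log R - 1
  set C := max b (-(m + 2 * t))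
  refine ⟨max (2 * log (2 / R)) (2 * (max 1 (2 * (2 + C) / (a * exp (-C))) - t)),
    fun u p hu hm ↦ ?_⟩
  rcases le_or_gt (u p) (2 * log (2 / R)) with hle | hlt
  · exact hle.trans (le_max_left _ _)
  obtain ⟨x, hx, s, hs, hup, hscale, hball⟩ := exists_mem_ball_le_add_log_four hR
    (hu.contDiffOn.continuousOn.mono (closedBall_subset_ball (by linarith))) hlt
  have hxp : ball x (exp (log R)) ⊆ ball p (2 * R) := by
    rw [exp_log hR]
    exact ball_subset_ball' (by linarith [mem_ball.1 hx])
  have hx_le := (hu.mono hxp).half_add_le ha (fun y hy ↦ hm y (hxp hy)) hs hball hscale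
    (sub_one_lt (log R)) (le_max_left _ _) (le_max_right _ _)
  exact le_max_of_le_right (by linarith)

theorem stmt2_general {Ω : Set E2} (hΩo : IsOpen Ω) (hΩb : Bornology.IsBounded Ω)
    {a : ℝ} (ha : 0 < a) (b m : ℝ) {K : Set E2} (hK : IsCompact K) (hKΩ : K ⊆ Ω) :
    ∃ c : ℝ, ∀ u : E2 → ℝ, IsLiouvilleSolution a b u Ω → ContinuousOn u (closure Ω) →
      (∀ x ∈ frontier Ω, m ≤ u x) → ∀ x ∈ K, u x ≤ c := by
  obtain ⟨δ, hδ, hKδ⟩ := hK.exists_thickening_subset_open hΩo hKΩ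
  obtain ⟨c, hc⟩ := exists_interior_bound ha (half_pos hδ) b m
  have hball : ∀ p ∈ K, ball p (2 * (δ / 2)) ⊆ Ω := fun p hp ↦ by
    rw [mul_div_cancel₀ _ two_ne_zero]
    exact (ball_subset_thickening hp δ).trans hKδ
  refine ⟨c, fun u hu huc hm p hp ↦ hc u p (hu.mono (hball p hp)) fun y hy ↦ ?_⟩
  exact le_of_lapl_neg_of_le_frontier hΩo hΩb huc hu.contDiffOn
    (fun z hz ↦ hu.lapl_neg_of_pos ha hz) hm (hball p hp hy)

end InteriorBound

end

theorem stmt2 (Ω : Set E2) (hΩo : IsOpen Ω) (hΩb : Bornology.IsBounded Ω)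
    (a b : ℝ) (ha : 0 < a) (hab : a ≤ b)
    (K : Set E2) (hK : IsCompact K) (hKΩ : K ⊆ Ω) :
    ∃ c : ℝ, ∀ V u : E2 → ℝ,
      (∀ x ∈ Ω, a ≤ V x ∧ V x ≤ b) →
      ContDiffOn ℝ 2 u (closure Ω) →
      (∀ x ∈ Ω, -(lapl u x) = V x * Real.exp (u x)) →
      (∀ x ∈ frontier Ω, u x = 0) →
      ∀ x ∈ K, u x ≤ c := by
  obtain ⟨c, hc⟩ := stmt2_general hΩo hΩb ha b 0 hK hKΩ
  exact ⟨c, fun V u hV hu hlapl hbdry ↦ hc u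
    (.of_eq_mul_exp (hu.mono subset_closure) hlapl hV) hu.continuousOn fun x hx ↦ (hbdry x hx).ge⟩
end
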